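/- arXiv:1810.08566 — 7 statements merged into one kernel-verified Lean document; each statement's English description precedes it below -/
import Mathlib

section
/- Define f, g, h : ℂ³ → ℂ by f(α,β,γ) = e^{2πiγ} + e^{-2πiγ}, g(α,β,γ) = e^{2πi(γ-α-β)} + e^{-2πi(γ-α-β)}, and h(α,β,γ) = e^{2πi(α-β)} + e^{-2πi(α-β)}. Then the map F = (f,g,h) : ℂ³ → ℂ³ is complex-differentiable everywhere, and at every point (α,β,γ) ∈ ℂ³ such that 2γ ∉ ℤ, 2(γ-α-β) ∉ ℤ and 2(α-β) ∉ ℤ, the (Fréchet) derivative of F is a linear isomorphism of ℂ³ (equivalently, the Jacobian determinant of F is nonzero there). In particular f, g, h are functionally independent at the very general point of ℂ³. -/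
open Complex

theorem aux_deriv (z : ℂ) (hz : ∀ n : ℤ, 2 * z ≠ (n : ℂ)) :
    ∃ c : ℂ, c ≠ 0 ∧ HasDerivAt (fun w : ℂ => exp (2 * (Real.pi : ℂ) * I * w) +
      exp (-(2 * (Real.pi : ℂ) * I * w))) c z := by
  have h1 : HasDerivAt (fun w : ℂ => 2 * (Real.pi : ℂ) * I * w) (2 * (Real.pi : ℂ) * I) z := by
    simpa using (hasDerivAt_id z).const_mul (2 * (Real.pi : ℂ) * I)
  refine ⟨_, ?_, h1.cexp.add h1.neg.cexp⟩
  intro h0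
  have hk : 2 * (Real.pi : ℂ) * I ≠ 0 := two_pi_I_ne_zero
  have h2 : exp (2 * (Real.pi : ℂ) * I * z) = exp (-(2 * (Real.pi : ℂ) * I * z)) := by
    apply mul_right_cancel₀ hk
    linear_combination h0
  obtain ⟨n, hn⟩ := exp_eq_exp_iff_exists_int.1 h2
  apply hz n
  apply mul_left_cancel₀ hk
  linear_combination hn

/-- The monodromy trace invariants
`f(α,β,γ) = e^{2πiγ} + e^{-2πiγ}`, `g(α,β,γ) = e^{2πi(γ-α-β)} + e^{-2πi(γ-α-β)}`,
`h(α,β,γ) = e^{2πi(α-β)} + e^{-2πi(α-β)}` assemble into an everywhere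
complex-differentiable map `F = (f,g,h) : ℂ³ → ℂ³` whose Fréchet derivative is a linear
isomorphism at every point where `2γ`, `2(γ-α-β)` and `2(α-β)` are not integers. -/
theorem stmt0 :
    let f : ℂ × ℂ × ℂ → ℂ := fun p =>
      exp (2 * (Real.pi : ℂ) * I * p.2.2) + exp (-(2 * (Real.pi : ℂ) * I * p.2.2))
    let g : ℂ × ℂ × ℂ → ℂ := fun p =>
      exp (2 * (Real.pi : ℂ) * I * (p.2.2 - p.1 - p.2.1)) +
        exp (-(2 * (Real.pi : ℂ) * I * (p.2.2 - p.1 - p.2.1)))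
    let h : ℂ × ℂ × ℂ → ℂ := fun p =>
      exp (2 * (Real.pi : ℂ) * I * (p.1 - p.2.1)) +
        exp (-(2 * (Real.pi : ℂ) * I * (p.1 - p.2.1)))
    let F : ℂ × ℂ × ℂ → ℂ × ℂ × ℂ := fun p => (f p, g p, h p)
    Differentiable ℂ F ∧
      ∀ p : ℂ × ℂ × ℂ,
        (∀ n : ℤ, 2 * p.2.2 ≠ (n : ℂ)) →
        (∀ n : ℤ, 2 * (p.2.2 - p.1 - p.2.1) ≠ (n : ℂ)) →
        (∀ n : ℤ, 2 * (p.1 - p.2.1) ≠ (n : ℂ)) →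
        Function.Bijective (fderiv ℂ F p) := by
  intro f g h F
  refine ⟨by fun_prop, ?_⟩
  intro p h1 h2 h3
  obtain ⟨a, ha, da⟩ := aux_deriv _ h1
  obtain ⟨b, hb, db⟩ := aux_deriv _ h2
  obtain ⟨c, hc, dc⟩ := aux_deriv _ h3
  have e1 : HasFDerivAt (fun q : ℂ × ℂ × ℂ => q.1) (ContinuousLinearMap.fst ℂ ℂ (ℂ × ℂ)) p :=
    hasFDerivAt_fst
  have e2 : HasFDerivAt (fun q : ℂ × ℂ × ℂ => q.2.1) ((ContinuousLinearMap.fst ℂ ℂ ℂ).comp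
      (ContinuousLinearMap.snd ℂ ℂ (ℂ × ℂ))) p :=
    hasFDerivAt_snd.fst
  have e3 : HasFDerivAt (fun q : ℂ × ℂ × ℂ => q.2.2) ((ContinuousLinearMap.snd ℂ ℂ ℂ).comp
      (ContinuousLinearMap.snd ℂ ℂ (ℂ × ℂ))) p :=
    hasFDerivAt_snd.snd
  have df := HasDerivAt.comp_hasFDerivAt p da e3
  have dg := HasDerivAt.comp_hasFDerivAt p db ((e3.sub e1).sub e2)
  have dh := HasDerivAt.comp_hasFDerivAt p dc (e1.sub e2)
  have dF := df.prodMk (dg.prodMk dh)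
  have hF : fderiv ℂ F p = _ := HasFDerivAt.fderiv dF
  rw [hF]
  have inj : Function.Injective (a • ((ContinuousLinearMap.snd ℂ ℂ ℂ).comp
      (ContinuousLinearMap.snd ℂ ℂ (ℂ × ℂ))) |>.prod
      ((b • (((ContinuousLinearMap.snd ℂ ℂ ℂ).comp (ContinuousLinearMap.snd ℂ ℂ (ℂ × ℂ))) -
        ContinuousLinearMap.fst ℂ ℂ (ℂ × ℂ) - ((ContinuousLinearMap.fst ℂ ℂ ℂ).comp
          (ContinuousLinearMap.snd ℂ ℂ (ℂ × ℂ))))).prod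
      (c • (ContinuousLinearMap.fst ℂ ℂ (ℂ × ℂ) - ((ContinuousLinearMap.fst ℂ ℂ ℂ).comp
          (ContinuousLinearMap.snd ℂ ℂ (ℂ × ℂ)))))) : ℂ × ℂ × ℂ →L[ℂ] ℂ × ℂ × ℂ) := by
    rw [injective_iff_map_eq_zero]
    rintro ⟨x, y, z⟩ hx
    simp [ha, hb, hc] at hx
    obtain ⟨hz, hy, hxy⟩ := hx
    have hx0 : x = 0 := by linear_combination (1/2) * hxy - (1/2) * hy + (1/2) * hz
    have hy0 : y = 0 := by linear_combination hx0 - hxy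
    simp [hx0, hy0, hz]
  exact ⟨inj, LinearMap.injective_iff_surjective.1 inj⟩
end

section
/- Let Ω ⊆ ℂ⁴ be an open set, with coordinates denoted (x, a, b, c), on which x ∉ {0,1}. Let w : Ω → ℂ be ℂ-analytic and nowhere vanishing, satisfying the partial differential equation ∂w/∂x = (a/x - b/(1-x))·w on Ω. Then each of the following four functions on Ω has identically vanishing partial derivative with respect to x (i.e., they are first integrals): (i) w_c/w; (ii) R = w_{aa}/w - (w_a)²/w²; (iii) S = w_{ab}/w - w_a·w_b/w²; (iv) T = w_{bb}/w - (w_b)²/w²; where subscripts denote partial derivatives with respect to the coordinates a, b, c. -/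
/-- Partial derivative of a function on `ℂ⁴` (coordinates `(x,a,b,c)` indexed by `Fin 4`)
in the `i`-th coordinate direction. -/
noncomputable def pd4 (i : Fin 4) (f : (Fin 4 → ℂ) → ℂ) (p : Fin 4 → ℂ) : ℂ :=
  fderiv ℂ f p (Pi.single i 1)

theorem pd4_analytic {Ω : Set (Fin 4 → ℂ)} {f : (Fin 4 → ℂ) → ℂ} (hf : AnalyticOnNhd ℂ f Ω)
    (i : Fin 4) : AnalyticOnNhd ℂ (pd4 i f) Ω := by
  intro p hp
  have h := (hf p hp).fderiv
  exact ((ContinuousLinearMap.apply ℂ ℂ (Pi.single i 1 : Fin 4 → ℂ)).analyticAt _).comp h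

theorem pd4_comm {f : (Fin 4 → ℂ) → ℂ} {p : Fin 4 → ℂ} (hf : AnalyticAt ℂ f p)
    (i j : Fin 4) : pd4 i (pd4 j f) p = pd4 j (pd4 i f) p := by
  have h : ∀ i j : Fin 4, pd4 i (pd4 j f) p
      = fderiv ℂ (fderiv ℂ f) p (Pi.single i 1) (Pi.single j 1) := by
    intro i j
    have hd : DifferentiableAt ℂ (fderiv ℂ f) p := hf.fderiv.differentiableAt
    have h2 := hd.hasFDerivAt.clm_apply
      (hasFDerivAt_const (Pi.single j 1 : Fin 4 → ℂ) p)
    have h3 : HasFDerivAt (pd4 j f) _ p := h2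
    unfold pd4 at h3 ⊢
    rw [h3.fderiv]
    simp
  rw [h, h]
  have hs : IsSymmSndFDerivAt ℂ f p :=
    (hf.contDiffAt (n := minSmoothness ℂ 2)).isSymmSndFDerivAt le_rfl
  exact hs _ _

theorem pd4_congr {Ω : Set (Fin 4 → ℂ)} (hΩ : IsOpen Ω) {f g : (Fin 4 → ℂ) → ℂ}
    (h : ∀ q ∈ Ω, f q = g q) (i : Fin 4) {p : Fin 4 → ℂ} (hp : p ∈ Ω) :
    pd4 i f p = pd4 i g p := by
  have : f =ᶠ[nhds p] g := by
    filter_upwards [hΩ.mem_nhds hp] with q hq using h q hq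
  unfold pd4
  rw [this.fderiv_eq]

theorem pd4_div {f g : (Fin 4 → ℂ) → ℂ} {p : Fin 4 → ℂ} (hf : DifferentiableAt ℂ f p)
    (hg : DifferentiableAt ℂ g p) (h0 : g p ≠ 0) (i : Fin 4) :
    pd4 i (fun q => f q / g q) p = pd4 i f p / g p - pd4 i g p * f p / (g p) ^ 2 := by
  unfold pd4
  have h := (hf.hasFDerivAt.fun_mul ((hasDerivAt_inv h0).comp_hasFDerivAt p hg.hasFDerivAt))
  have h' : HasFDerivAt (fun q => f q / g q) _ p := h
  rw [h'.fderiv]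
  simp
  field_simp
  ring

theorem pd4_sub {f g : (Fin 4 → ℂ) → ℂ} {p : Fin 4 → ℂ} (hf : DifferentiableAt ℂ f p)
    (hg : DifferentiableAt ℂ g p) (i : Fin 4) :
    pd4 i (fun q => f q - g q) p = pd4 i f p - pd4 i g p := by
  unfold pd4
  rw [fderiv_fun_sub hf hg]
  simp

theorem pd4_const (c : ℂ) (p : Fin 4 → ℂ) (i : Fin 4) : pd4 i (fun _ => c) p = 0 := by
  simp [pd4]

theorem pd4_coord (j : Fin 4) (p : Fin 4 → ℂ) (i : Fin 4) :
    pd4 i (fun q => q j) p = (Pi.single i 1 : Fin 4 → ℂ) j := by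
  unfold pd4
  rw [(hasFDerivAt_apply j p).fderiv]
  simp

theorem pd4_frac {u v : (Fin 4 → ℂ) → ℂ} {p : Fin 4 → ℂ} (hu : DifferentiableAt ℂ u p)
    (hv : DifferentiableAt ℂ v p) (h0 : p 0 ≠ 0) (h1 : p 0 ≠ 1) {i : Fin 4} (hi : i ≠ 0) :
    pd4 i (fun q => u q / q 0 - v q / (1 - q 0)) p
      = pd4 i u p / p 0 - pd4 i v p / (1 - p 0) := by
  have h1' : 1 - p 0 ≠ 0 := sub_ne_zero.mpr (Ne.symm h1)
  have hc : DifferentiableAt ℂ (fun q : Fin 4 → ℂ => q 0) p := by fun_prop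
  have hc' : DifferentiableAt ℂ (fun q : Fin 4 → ℂ => 1 - q 0) p := by fun_prop
  have hd : DifferentiableAt ℂ (fun q : Fin 4 → ℂ => u q / q 0) p := by
    simp only [div_eq_mul_inv]
    exact hu.fun_mul (hc.fun_inv h0)
  have hd' : DifferentiableAt ℂ (fun q : Fin 4 → ℂ => v q / (1 - q 0)) p := by
    simp only [div_eq_mul_inv]
    exact hv.fun_mul (hc'.fun_inv h1')
  rw [pd4_sub hd hd', pd4_div hu hc h0, pd4_div hv hc' h1',
    pd4_sub (by fun_prop) hc, pd4_const, pd4_coord]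
  simp [Pi.single_apply, hi.symm]

/-- If `w` is analytic and nowhere vanishing on an open set
`Ω ⊆ ℂ⁴` (coordinates `(x,a,b,c)`, with `x ∉ {0,1}` on `Ω`) and satisfies
`∂w/∂x = (a/x - b/(1-x))·w`, then `w_c/w`, `R = w_{aa}/w - w_a²/w²`,
`S = w_{ab}/w - w_a w_b/w²` and `T = w_{bb}/w - w_b²/w²` are first integrals:
their partial derivatives with respect to `x` vanish identically on `Ω`. -/
theorem stmt4 (Ω : Set (Fin 4 → ℂ)) (hΩ : IsOpen Ω)
    (h01 : ∀ p ∈ Ω, p 0 ≠ 0 ∧ p 0 ≠ 1)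
    (w : (Fin 4 → ℂ) → ℂ) (hw : AnalyticOnNhd ℂ w Ω)
    (hnv : ∀ p ∈ Ω, w p ≠ 0)
    (hpde : ∀ p ∈ Ω, pd4 0 w p = (p 1 / p 0 - p 2 / (1 - p 0)) * w p) :
    (∀ p ∈ Ω, pd4 0 (fun q => pd4 3 w q / w q) p = 0) ∧
    (∀ p ∈ Ω, pd4 0 (fun q => pd4 1 (pd4 1 w) q / w q - (pd4 1 w q) ^ 2 / (w q) ^ 2) p = 0) ∧
    (∀ p ∈ Ω, pd4 0 (fun q => pd4 1 (pd4 2 w) q / w q - pd4 1 w q * pd4 2 w q / (w q) ^ 2) p = 0) ∧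
    (∀ p ∈ Ω, pd4 0 (fun q => pd4 2 (pd4 2 w) q / w q - (pd4 2 w q) ^ 2 / (w q) ^ 2) p = 0) := by
  have hL : ∀ i j : Fin 4, ∀ p ∈ Ω, pd4 i (fun q => pd4 j w q / w q) p
      = pd4 i (pd4 j w) p / w p - pd4 i w p * pd4 j w p / (w p) ^ 2 := by
    intro i j p hp
    exact pd4_div (pd4_analytic hw j p hp).differentiableAt (hw p hp).differentiableAt
      (hnv p hp) i
  have hLa : ∀ j : Fin 4, AnalyticOnNhd ℂ (fun q => pd4 j w q / w q) Ω := fun j p hp =>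
    (pd4_analytic hw j p hp).fun_div (hw p hp) (hnv p hp)
  -- the `x`-derivative of a logarithmic derivative
  have h0L : ∀ i : Fin 4, i ≠ 0 → ∀ p ∈ Ω, pd4 0 (fun q => pd4 i w q / w q) p
      = (Pi.single i 1 : Fin 4 → ℂ) 1 / p 0 - (Pi.single i 1 : Fin 4 → ℂ) 2 / (1 - p 0) := by
    intro i hi p hp
    have e : pd4 0 (fun q => pd4 i w q / w q) p = pd4 i (fun q => pd4 0 w q / w q) p := by
      rw [hL 0 i p hp, hL i 0 p hp, pd4_comm (hw p hp) 0 i, mul_comm (pd4 0 w p)]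
    rw [e, pd4_congr hΩ (g := fun q => q 1 / q 0 - q 2 / (1 - q 0)) _ i hp,
      pd4_frac (by fun_prop) (by fun_prop) (h01 p hp).1 (h01 p hp).2 hi, pd4_coord, pd4_coord]
    intro q hq
    rw [hpde q hq, mul_div_assoc, div_self (hnv q hq), mul_one]
  have h2 : ∀ i j : Fin 4, i ≠ 0 → j ≠ 0 → ∀ p ∈ Ω,
      pd4 0 (fun q => pd4 i (pd4 j w) q / w q - pd4 i w q * pd4 j w q / (w q) ^ 2) p = 0 := by
    intro i j hi hj p hp
    rw [pd4_congr hΩ (g := pd4 i (fun q => pd4 j w q / w q))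
        (fun q hq => (hL i j q hq).symm) 0 hp, pd4_comm (hLa j p hp) 0 i,
      pd4_congr hΩ (h0L j hj) i hp,
      pd4_frac (by fun_prop) (by fun_prop) (h01 p hp).1 (h01 p hp).2 hi, pd4_const, pd4_const]
    simp
  refine ⟨fun p hp => ?_, fun p hp => ?_, h2 1 2 (by decide) (by decide), fun p hp => ?_⟩
  · rw [h0L 3 (by decide) p hp]
    simp [Pi.single_apply]
  · simpa only [pow_two] using h2 1 1 (by decide) (by decide) p hp
  · simpa only [pow_two] using h2 2 2 (by decide) (by decide) p hp
end

section
/- Let n ≥ 1 and k ≥ 1, and let Ω ⊆ ℂᵏ be an open set of points a = (a₁,…,a_k) with pairwise distinct coordinates. Let A₁,…,A_k : Ω → Matrix (Fin n) (Fin n) ℂ be ℂ-analytic maps satisfying the Schlesinger equations: for all i ≠ j, ∂A_i/∂a_j = [A_i, A_j]/(a_i - a_j), and for all i, ∂A_i/∂a_i = -∑_{j≠i} [A_i, A_j]/(a_i - a_j), where [X,Y] = XY - YX. For x ∈ ℂ with x ≠ a_i for all i, set B(x,a) = ∑_i A_i(a)/(x - a_i) and C_i(x,a) = -A_i(a)/(x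 - a_i). Then the zero-curvature (Frobenius integrability) conditions hold on the open set { (x,a) : a ∈ Ω, x ≠ a_i ∀i }: for every i, ∂B/∂a_i - ∂C_i/∂x = C_i·B - B·C_i, and for every i, j, ∂C_i/∂a_j - ∂C_j/∂a_i = C_j·C_i - C_i·C_j. -/
open Matrix

attribute [local instance] Matrix.normedAddCommGroup Matrix.normedSpace

/-- Derivative of one summand `(x - aᵢ)⁻¹ • F(a)`. -/
theorem aux_deriv_s5 (n k : ℕ) (F : (Fin k → ℂ) → Matrix (Fin n) (Fin n) ℂ)
    (p : ℂ × (Fin k → ℂ)) (hF : DifferentiableAt ℂ F p.2) (i : Fin k) (hp : p.1 ≠ p.2 i) :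
    ∃ L : ℂ × (Fin k → ℂ) →L[ℂ] Matrix (Fin n) (Fin n) ℂ,
      HasFDerivAt (fun q : ℂ × (Fin k → ℂ) => (q.1 - q.2 i)⁻¹ • F q.2) L p ∧
      ∀ s v, L (s, v) = (p.1 - p.2 i)⁻¹ • fderiv ℂ F p.2 v
        - ((s - v i) * ((p.1 - p.2 i)⁻¹ * (p.1 - p.2 i)⁻¹)) • F p.2 := by
  have h1 : HasFDerivAt (fun q : ℂ × (Fin k → ℂ) => q.1 - q.2 i)
      (ContinuousLinearMap.fst ℂ ℂ (Fin k → ℂ) -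
        (ContinuousLinearMap.proj (R := ℂ) (φ := fun _ : Fin k => ℂ) i).comp
          (ContinuousLinearMap.snd ℂ ℂ (Fin k → ℂ))) p :=
    ContinuousLinearMap.hasFDerivAt (ContinuousLinearMap.fst ℂ ℂ (Fin k → ℂ) -
        (ContinuousLinearMap.proj (R := ℂ) (φ := fun _ : Fin k => ℂ) i).comp
          (ContinuousLinearMap.snd ℂ ℂ (Fin k → ℂ)))
  have h2 := (hasDerivAt_inv (sub_ne_zero.mpr hp)).comp_hasFDerivAt p h1
  have h3 : HasFDerivAt (fun q : ℂ × (Fin k → ℂ) => F q.2) _ p :=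
    HasFDerivAt.comp p hF.hasFDerivAt (hasFDerivAt_snd (𝕜 := ℂ) (p := p))
  refine ⟨_, h2.smul h3, ?_⟩
  intro s v
  change (p.1 - p.2 i)⁻¹ • fderiv ℂ F p.2 v +
    (-((p.1 - p.2 i) ^ 2)⁻¹ * (s - v i)) • F p.2 = _
  rw [sub_eq_add_neg ((p.1 - p.2 i)⁻¹ • fderiv ℂ F p.2 v), ← neg_smul]
  congr 2
  rw [pow_two, mul_inv]
  ring

/-- If the matrices `A₁,…,A_k` satisfy the Schlesinger equations on an open
set `Ω` of pairwise-distinct parameters `(a₁,…,a_k)`, then the connection matrices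
`B(x,a) = ∑ᵢ Aᵢ(a)/(x-aᵢ)` and `Cᵢ(x,a) = -Aᵢ(a)/(x-aᵢ)` satisfy the zero-curvature
(Frobenius integrability) conditions
`∂B/∂aᵢ - ∂Cᵢ/∂x = CᵢB - BCᵢ` and `∂Cᵢ/∂aⱼ - ∂Cⱼ/∂aᵢ = CⱼCᵢ - CᵢCⱼ`. -/
theorem stmt5 (n k : ℕ) (hn : 1 ≤ n) (hk : 1 ≤ k)
    (Ω : Set (Fin k → ℂ)) (hΩ : IsOpen Ω)
    (hdist : ∀ a ∈ Ω, ∀ i j : Fin k, i ≠ j → a i ≠ a j)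
    (A : Fin k → (Fin k → ℂ) → Matrix (Fin n) (Fin n) ℂ)
    (hA : ∀ i, AnalyticOnNhd ℂ (A i) Ω)
    (hSch₁ : ∀ a ∈ Ω, ∀ i j : Fin k, i ≠ j →
      fderiv ℂ (A i) a (Pi.single j 1) =
        (a i - a j)⁻¹ • (A i a * A j a - A j a * A i a))
    (hSch₂ : ∀ a ∈ Ω, ∀ i : Fin k,
      fderiv ℂ (A i) a (Pi.single i 1) =
        -∑ j ∈ Finset.univ.erase i, (a i - a j)⁻¹ • (A i a * A j a - A j a * A i a))
    (B : ℂ × (Fin k → ℂ) → Matrix (Fin n) (Fin n) ℂ)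
    (hB : ∀ p : ℂ × (Fin k → ℂ), B p = ∑ i, (p.1 - p.2 i)⁻¹ • A i p.2)
    (C : Fin k → ℂ × (Fin k → ℂ) → Matrix (Fin n) (Fin n) ℂ)
    (hC : ∀ i, ∀ p : ℂ × (Fin k → ℂ), C i p = -((p.1 - p.2 i)⁻¹ • A i p.2)) :
    ∀ p : ℂ × (Fin k → ℂ), p.2 ∈ Ω → (∀ i, p.1 ≠ p.2 i) →
      (∀ i, fderiv ℂ B p (0, Pi.single i 1) - fderiv ℂ (C i) p (1, 0) =
        C i p * B p - B p * C i p) ∧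
      (∀ i j, fderiv ℂ (C i) p (0, Pi.single j 1) - fderiv ℂ (C j) p (0, Pi.single i 1) =
        C j p * C i p - C i p * C j p) := by
  intro p hp hx
  have hd : ∀ i, DifferentiableAt ℂ (A i) p.2 := fun i => (hA i p.2 hp).differentiableAt
  choose L hL hLv using fun i => aux_deriv_s5 n k (A i) p (hd i) i (hx i)
  have hBd : fderiv ℂ B p = ∑ i, L i := by
    rw [funext hB]
    exact (HasFDerivAt.fun_sum fun i _ => hL i).fderiv
  have hCd : ∀ i, fderiv ℂ (C i) p = -L i := by
    intro i
    rw [funext (hC i)]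
    exact (hL i).neg.fderiv
  have key : ∀ i j, i ≠ j → (p.1 - p.2 j)⁻¹ * (p.2 i - p.2 j)⁻¹ =
      (p.1 - p.2 i)⁻¹ * (p.2 i - p.2 j)⁻¹ - (p.1 - p.2 i)⁻¹ * (p.1 - p.2 j)⁻¹ := by
    intro i j hij
    have h1 := sub_ne_zero.mpr (hx i)
    have h2 := sub_ne_zero.mpr (hx j)
    have h3 := sub_ne_zero.mpr (hdist p.2 hp i j hij)
    field_simp
    ring
  have flip : ∀ i j, (p.2 j - p.2 i)⁻¹ = -(p.2 i - p.2 j)⁻¹ := by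
    intro i j
    rw [← inv_neg, neg_sub]
  constructor
  · intro i
    rw [hBd, hCd, hB, hC, ContinuousLinearMap.sum_apply, ContinuousLinearMap.neg_apply,
      ← Finset.add_sum_erase _ _ (Finset.mem_univ i), hLv, hLv, hSch₂ p.2 hp,
      Finset.mul_sum, Finset.sum_mul, ← Finset.sum_sub_distrib,
      ← Finset.add_sum_erase _ (fun j => _ - _) (Finset.mem_univ i)]
    have e : ∀ j ∈ Finset.univ.erase i, L j (0, Pi.single i 1) =
        (p.1 - p.2 i)⁻¹ • ((p.2 i - p.2 j)⁻¹ • (A i p.2 * A j p.2 - A j p.2 * A i p.2)) +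
        (-((p.1 - p.2 i)⁻¹ • A i p.2) * ((p.1 - p.2 j)⁻¹ • A j p.2) -
          (p.1 - p.2 j)⁻¹ • A j p.2 * -((p.1 - p.2 i)⁻¹ • A i p.2)) := by
      intro j hj
      have hji : j ≠ i := Finset.ne_of_mem_erase hj
      rw [hLv, hSch₁ p.2 hp j i hji, flip i j, Pi.single_eq_of_ne hji]
      have hk := key i j hji.symm
      simp only [neg_mul, mul_neg, smul_mul_smul_comm, smul_smul, hk]
      module
    rw [Finset.sum_congr rfl e, Finset.sum_add_distrib, ← Finset.smul_sum]
    simp only [Pi.single_eq_same, Pi.zero_apply, map_zero, neg_mul, mul_neg]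
    module
  · intro i j
    by_cases hij : i = j
    · subst hij
      simp
    · rw [hCd, hCd, hC, hC, ContinuousLinearMap.neg_apply, ContinuousLinearMap.neg_apply,
        hLv, hLv, hSch₁ p.2 hp i j hij, hSch₁ p.2 hp j i (Ne.symm hij), flip i j,
        Pi.single_eq_of_ne hij, Pi.single_eq_of_ne (Ne.symm hij)]
      have hk := key i j hij
      simp only [neg_mul, mul_neg, smul_mul_smul_comm, smul_smul, hk]
      module
end

section
/- Let a, b ∈ ℂ and let D = ℂ \ ((-∞,0] ∪ [1,∞)) be the doubly slit plane (the set of z ∈ ℂ such that z is not a real number ≤ 0 and z is not a real number ≥ 1). Set w₀(x) = exp(a·Log(x) + b·Log(1-x)) using principal branches of the logarithm, and let Φ(x) be the 3×3 matrix with rows (w₀(x), 0, 0), (Log(x)·w₀(x), w₀(x), 0), (Log(1-x)·w₀(x), 0, w₀(x)). Then Φ is differentiable on D, satisfies Φ'(x) = A(x)·Φ(x) for all x ∈ D, where A(x) is the 3×3 matrix with rows (a/x - b/(1-x), 0, 0), (1/x, a/x - b/(1-x), 0), (-1/(1-x), 0, a/x - b/(1-x)), and det Φ(x) = w₀(x)³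 ≠ 0 for all x ∈ D. -/
open Complex Matrix

attribute [local instance] Matrix.normedAddCommGroup Matrix.normedSpace

/-- On the doubly slit plane `D = ℂ \ ((-∞,0] ∪ [1,∞))`, with
`w₀(x) = exp(a·Log x + b·Log(1-x))`, the matrix
`Φ(x) = !![w₀,0,0; Log(x)w₀, w₀, 0; Log(1-x)w₀, 0, w₀]` is differentiable, solves
`Φ' = A·Φ` with the displayed lower-triangular `A`, and has determinant `w₀³ ≠ 0`. -/
theorem stmt6 (a b : ℂ) :
    let D : Set ℂ := {z | (¬∃ r : ℝ, r ≤ 0 ∧ z = (r : ℂ)) ∧ ¬∃ r : ℝ, 1 ≤ r ∧ z = (r : ℂ)}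
    let w₀ : ℂ → ℂ := fun x => exp (a * log x + b * log (1 - x))
    let Φ : ℂ → Matrix (Fin 3) (Fin 3) ℂ := fun x =>
      !![w₀ x, 0, 0; log x * w₀ x, w₀ x, 0; log (1 - x) * w₀ x, 0, w₀ x]
    let A : ℂ → Matrix (Fin 3) (Fin 3) ℂ := fun x =>
      !![a / x - b / (1 - x), 0, 0;
         1 / x, a / x - b / (1 - x), 0;
         -(1 / (1 - x)), 0, a / x - b / (1 - x)]
    ∀ x ∈ D, HasDerivAt Φ (A x * Φ x) x ∧ (Φ x).det = (w₀ x) ^ 3 ∧ w₀ x ≠ 0 := by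
  intro D w₀ Φ A x hx
  obtain ⟨h0, h1⟩ := hx
  have hs : x ∈ slitPlane := by
    rw [mem_slitPlane_iff]
    by_contra! h
    exact h0 ⟨x.re, h.1, Complex.ext (by simp) (by simp [h.2])⟩
  have hs' : 1 - x ∈ slitPlane := by
    rw [mem_slitPlane_iff]
    by_contra! h
    obtain ⟨h2, h3⟩ := h
    simp at h2 h3
    exact h1 ⟨x.re, h2, Complex.ext (by simp) (by simp [h3])⟩
  have hl : HasDerivAt (fun x : ℂ => log x) (1 / x) x := by
    simpa using Complex.hasDerivAt_log hs
  have hl' : HasDerivAt (fun x : ℂ => log (1 - x)) (-(1 / (1 - x))) x := by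
    have := ((hasDerivAt_id x).const_sub 1).clog hs'
    simpa [neg_div] using this
  have hw : HasDerivAt w₀ ((a / x - b / (1 - x)) * w₀ x) x := by
    have := ((hl.const_mul a).add (hl'.const_mul b)).cexp
    refine this.congr_deriv ?_
    simp only [w₀, Pi.add_apply]
    ring
  have hlw : HasDerivAt (fun x => log x * w₀ x)
      (1 / x * w₀ x + (a / x - b / (1 - x)) * (log x * w₀ x)) x :=
    (hl.mul hw).congr_deriv (by ring)
  have hlw' : HasDerivAt (fun x => log (1 - x) * w₀ x)
      (-(1 / (1 - x) * w₀ x) + (a / x - b / (1 - x)) * (log (1 - x) * w₀ x)) x :=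
    (hl'.mul hw).congr_deriv (by ring)
  have hz : HasDerivAt (fun _ : ℂ => (0 : ℂ)) 0 x := hasDerivAt_const x 0
  have hw0 : w₀ x ≠ 0 := Complex.exp_ne_zero _
  clear_value w₀
  refine ⟨?_, ?_, ?_⟩
  · refine hasDerivAt_pi.2 fun i => hasDerivAt_pi.2 fun j => ?_
    fin_cases i <;> fin_cases j <;>
      simp [Φ, A, Matrix.mul_apply, Fin.sum_univ_three, -one_div] <;> assumption
  · simp [Φ, Matrix.det_fin_three]
    ring
  · exact hw0
end

section
/- Let α, β, γ ∈ ℂ with γ ∉ {0, -1, -2, …} (i.e., γ ≠ -n for all natural numbers n). Define the Gauss hypergeometric series F(x) = ∑_{n=0}^∞ ((α)_n (β)_n / (γ)_n) · xⁿ/n!, where (q)_n = q(q+1)⋯(q+n-1) is the ascending Pochhammer symbol. Then: (i) the series converges for every x ∈ ℂ with |x| < 1, so F is a holomorphic function on the open unit ball; and (ii) F satisfies Gauss' hypergeometric equation there: x(1-x)·F''(x) + (γ - (α+β+1)x)·F'(x) - αβ·F(x) = 0 for all |x| < 1. -/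
/-- The `n`-th term of the Gauss hypergeometric series:
`((α)ₙ(β)ₙ/(γ)ₙ)·xⁿ/n!`, where `(q)ₙ` is the ascending Pochhammer symbol. -/
noncomputable def hgTerm (α β γ x : ℂ) (n : ℕ) : ℂ :=
  ((ascPochhammer ℂ n).eval α * (ascPochhammer ℂ n).eval β / (ascPochhammer ℂ n).eval γ) *
    x ^ n / n.factorial

/-- The Gauss hypergeometric series `₂F₁(α,β,γ;x) = ∑ₙ ((α)ₙ(β)ₙ/(γ)ₙ)·xⁿ/n!`. -/
noncomputable def hgF (α β γ x : ℂ) : ℂ := ∑' n : ℕ, hgTerm α β γ x n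

/-- Ratio of consecutive coefficients tends to one. -/
def HgRatio (c : ℕ → ℂ) : Prop :=
  ∃ q : ℕ → ℂ, Filter.Tendsto q Filter.atTop (nhds 1) ∧ ∀ n, c (n + 1) = q n * c n

/-- Coefficients of the formal derivative. -/
noncomputable def hgD (c : ℕ → ℂ) (n : ℕ) : ℂ := ((n : ℂ) + 1) * c (n + 1)

theorem hg_tendsto_frac (a b : ℂ) :
    Filter.Tendsto (fun n : ℕ => (a + n) / (b + n)) Filter.atTop (nhds 1) := by
  have h := tendsto_add_mul_div_add_mul_atTop_nhds (𝕜 := ℂ) a b 1 (d := 1) one_ne_zero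
  simpa using h

theorem HgRatio.hgD {c : ℕ → ℂ} (h : HgRatio c) : HgRatio (hgD c) := by
  obtain ⟨q, hq, hc⟩ := h
  refine ⟨fun n => ((2 + (n : ℂ)) / (1 + n)) * q (n + 1), ?_, fun n => ?_⟩
  · simpa using (hg_tendsto_frac 2 1).mul ((Filter.tendsto_add_atTop_iff_nat 1).2 hq)
  · have : (1 + (n : ℂ)) ≠ 0 := by
      rw [add_comm]; exact Nat.cast_add_one_ne_zero n
    simp only [_root_.hgD]
    rw [hc (n + 1)]
    push_cast
    field_simp
    ring

theorem HgRatio.summable_norm {c : ℕ → ℂ} (h : HgRatio c) {r : ℝ} (hr0 : 0 ≤ r) (hr : r < 1) :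
    Summable (fun n => ‖c n‖ * r ^ n) := by
  obtain ⟨q, hq, hc⟩ := h
  obtain ⟨s, hrs, hs⟩ := exists_between hr
  have h1 : Filter.Tendsto (fun n => ‖q n‖ * r) Filter.atTop (nhds r) := by
    simpa using hq.norm.mul_const r
  refine summable_of_ratio_norm_eventually_le hs ?_
  filter_upwards [h1.eventually_lt_const hrs] with n hn
  have e : ‖c (n + 1)‖ * r ^ (n + 1) = (‖q n‖ * r) * (‖c n‖ * r ^ n) := by
    rw [hc n, norm_mul]; ring
  rw [e, norm_mul, Real.norm_of_nonneg (by positivity : 0 ≤ ‖q n‖ * r)]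
  gcongr

theorem HgRatio.summable {c : ℕ → ℂ} (h : HgRatio c) {x : ℂ} (hx : ‖x‖ < 1) :
    Summable (fun n => c n * x ^ n) := by
  refine Summable.of_norm ?_
  simpa using h.summable_norm (norm_nonneg x) hx

theorem HgRatio.main {c : ℕ → ℂ} (h : HgRatio c) {x : ℂ} (hx : ‖x‖ < 1) :
    DifferentiableAt ℂ (fun z => ∑' n, c n * z ^ n) x ∧
    deriv (fun z => ∑' n, c n * z ^ n) x = ∑' n, _root_.hgD c n * x ^ n := by
  obtain ⟨r, hxr, hr⟩ := exists_between hx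
  have hr0 : 0 ≤ r := (norm_nonneg x).trans hxr.le
  have hu := h.summable_norm hr0 hr
  have hd : ∀ i : ℕ, DifferentiableOn ℂ (fun z : ℂ => c i * z ^ i) (Metric.ball 0 r) := by
    intro i; fun_prop
  have hb : ∀ (i : ℕ) (w : ℂ), w ∈ Metric.ball (0 : ℂ) r → ‖c i * w ^ i‖ ≤ ‖c i‖ * r ^ i := by
    intro i w hw
    have : ‖w‖ ≤ r := by simpa using (mem_ball_zero_iff.1 hw).le
    rw [norm_mul, norm_pow]; gcongr
  have hxm : x ∈ Metric.ball (0 : ℂ) r := by simpa using hxr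
  refine ⟨(Complex.differentiableOn_tsum_of_summable_norm hu hd Metric.isOpen_ball hb).differentiableAt
    (Metric.isOpen_ball.mem_nhds hxm), ?_⟩
  have hs := Complex.hasSum_deriv_of_summable_norm hu hd Metric.isOpen_ball hb hxm
  rw [← hs.tsum_eq, hs.summable.tsum_eq_zero_add]
  simp [_root_.hgD]
  refine tsum_congr fun n => ?_
  ring

theorem hg_congr {f g : ℕ → ℂ} {S : ℂ} (h : HasSum f S) (hf : ∀ n, g n = f n) :
    HasSum g S := by
  rw [funext hf]
  exact h

theorem hg_shift {a : ℕ → ℂ} {x S : ℂ} (h : HasSum (fun n => hgD a n * x ^ n) S) :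
    HasSum (fun n : ℕ => n * a n * x ^ n) (x * S) := by
  rw [← hasSum_nat_add_iff' 1]
  simp only [Finset.sum_range_one, Nat.cast_zero, zero_mul, sub_zero]
  refine hg_congr (h.mul_left x) ?_
  intro n
  simp only [hgD]; push_cast; ring

theorem hg_zero {f : ℕ → ℂ} {S : ℂ} (h : HasSum f S) (hf : ∀ n, f n = 0) : S = 0 := by
  rw [funext hf] at h
  exact h.unique hasSum_zero

/-- Coefficients of the hypergeometric series. -/
noncomputable def hgC (α β γ : ℂ) (n : ℕ) : ℂ :=
  ((ascPochhammer ℂ n).eval α * (ascPochhammer ℂ n).eval β / (ascPochhammer ℂ n).eval γ) /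
    n.factorial

theorem hgTerm_eq (α β γ x : ℂ) : hgTerm α β γ x = fun n => hgC α β γ n * x ^ n := by
  funext n; simp only [hgTerm, hgC]; ring

theorem hgC_succ (α β γ : ℂ) (n : ℕ) :
    hgC α β γ (n + 1) = ((α + n) / (γ + n) * ((β + n) / (1 + n))) * hgC α β γ n := by
  simp only [hgC, ascPochhammer_succ_eval, Nat.factorial_succ]
  push_cast
  simp only [div_eq_mul_inv, mul_inv, add_comm (n : ℂ) 1]
  ring

theorem hgC_ratio (α β γ : ℂ) : HgRatio (hgC α β γ) :=
  ⟨_, by simpa using (hg_tendsto_frac α γ).mul (hg_tendsto_frac β 1), hgC_succ α β γ⟩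

/-- For `γ` not a nonpositive integer, the hypergeometric series converges
on the open unit ball, defines a holomorphic function there, and satisfies Gauss'
hypergeometric equation `x(1-x)F'' + (γ-(α+β+1)x)F' - αβF = 0` for `|x| < 1`. -/
theorem stmt7 (α β γ : ℂ) (hγ : ∀ n : ℕ, γ ≠ -(n : ℂ)) :
    (∀ x : ℂ, ‖x‖ < 1 → Summable (hgTerm α β γ x)) ∧
    DifferentiableOn ℂ (hgF α β γ) (Metric.ball 0 1) ∧
    ∀ x ∈ Metric.ball (0 : ℂ) 1,
      x * (1 - x) * deriv (deriv (hgF α β γ)) x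
        + (γ - (α + β + 1) * x) * deriv (hgF α β γ) x
        - α * β * hgF α β γ x = 0 := by
  have hR := hgC_ratio α β γ
  have hF : hgF α β γ = fun z => ∑' n, hgC α β γ n * z ^ n := by
    funext z; simp only [hgF, hgTerm_eq]
  refine ⟨fun x hx => ?_, fun x hx => ?_, fun x hx => ?_⟩
  · rw [hgTerm_eq]; exact hR.summable hx
  · rw [hF]; exact (hR.main (by simpa using hx)).1.differentiableWithinAt
  have hx1 : ‖x‖ < 1 := by simpa using hx
  have d1 : deriv (hgF α β γ) x = ∑' n, hgD (hgC α β γ) n * x ^ n := by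
    rw [hF]; exact (hR.main hx1).2
  have d2 : deriv (deriv (hgF α β γ)) x = ∑' n, hgD (hgD (hgC α β γ)) n * x ^ n := by
    rw [← (hR.hgD.main hx1).2]
    refine Filter.EventuallyEq.deriv_eq ?_
    filter_upwards [Metric.isOpen_ball.mem_nhds hx] with z hz
    rw [hF]; exact (hR.main (by simpa using hz)).2
  have s0 := (hR.summable hx1).hasSum
  have s1 := (hR.hgD.summable hx1).hasSum
  have s2 := (hR.hgD.hgD.summable hx1).hasSum
  rw [← d1] at s1
  rw [← d2] at s2
  have e0 : ∑' n, hgC α β γ n * x ^ n = hgF α β γ x := by rw [hF]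
  rw [e0] at s0
  have t1 := hg_shift s1
  have t2 := hg_shift s2
  have t3 : HasSum (fun n : ℕ => n * (((n : ℂ) - 1) * hgC α β γ n) * x ^ n)
      (x * (x * deriv (deriv (hgF α β γ)) x)) := by
    refine hg_shift (a := fun n => ((n : ℂ) - 1) * hgC α β γ n) ?_
    convert t2 using 1
    funext n
    simp only [hgD]; push_cast; ring
  have T := (((t2.sub t3).add (s1.mul_left γ)).sub (t1.mul_left (α + β + 1))).sub
    (s0.mul_left (α * β))
  have Z := hg_zero T ?_
  · linear_combination Z
  intro n
  have h1 : (1 + (n : ℂ)) ≠ 0 := by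
    rw [add_comm]; exact Nat.cast_add_one_ne_zero n
  have h2 : γ + n ≠ 0 := fun h => hγ n (eq_neg_of_add_eq_zero_left h)
  have key : (γ + n) * hgD (hgC α β γ) n = (α + n) * (β + n) * hgC α β γ n := by
    simp only [hgD]
    rw [hgC_succ]
    field_simp
    ring
  linear_combination x ^ n * key
end

section
/- Let σ : ℂ⁴ → ℂ be an entire (everywhere ℂ-analytic) and nowhere vanishing function of the variables (x, α, β, γ). Define the differential operators ∂_a = -∂_β - ∂_γ, ∂_b = ∂_β, ∂_c = ∂_α - ∂_β (where ∂_x, ∂_α, ∂_β, ∂_γ are the partial derivatives in the four coordinates). Then σ satisfies the system ∂_x σ = 0, ∂_c σ = 0, ∂_a(∂_a σ / σ) = 0, ∂_b(∂_a σ / σ) = 0, ∂_b(∂_b σ / σ) = 0 identically on ℂ⁴ if and only if there exist constants μ₀, μ₁, μ₂ ∈ ℂ such that σ(x, α, β, γ) = exp(μ₀ + μ₁·γ + μ₂·(α+β)) for all (x, α, β, γ) ∈ ℂ⁴. -/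
/-- Partial derivative in the `i`-th coordinate direction on `ℂ⁴`, whose coordinates
`(x, α, β, γ)` are indexed by `0, 1, 2, 3 : Fin 4`. -/
noncomputable def pdx (i : Fin 4) (f : (Fin 4 → ℂ) → ℂ) (p : Fin 4 → ℂ) : ℂ :=
  fderiv ℂ f p (Pi.single i 1)

/-- The operator `∂_a = -∂_β - ∂_γ`. -/
noncomputable def pda (f : (Fin 4 → ℂ) → ℂ) (p : Fin 4 → ℂ) : ℂ := -pdx 2 f p - pdx 3 f p

/-- The operator `∂_b = ∂_β`. -/
noncomputable def pdb (f : (Fin 4 → ℂ) → ℂ) (p : Fin 4 → ℂ) : ℂ := pdx 2 f p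

/-- The operator `∂_c = ∂_α - ∂_β`. -/
noncomputable def pdc (f : (Fin 4 → ℂ) → ℂ) (p : Fin 4 → ℂ) : ℂ := pdx 1 f p - pdx 2 f p


/-- Logarithmic partial derivative. -/
noncomputable def lgd (σ : (Fin 4 → ℂ) → ℂ) (j : Fin 4) (q : Fin 4 → ℂ) : ℂ := pdx j σ q / σ q

lemma pdx_diff (σ : (Fin 4 → ℂ) → ℂ) (hσ : AnalyticOnNhd ℂ σ Set.univ) (j : Fin 4) :
    Differentiable ℂ (pdx j σ) := fun p => by
  have h : DifferentiableAt ℂ (fderiv ℂ σ) p := (hσ.fderiv p trivial).differentiableAt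
  exact h.clm_apply (differentiableAt_const _)

lemma lgd_hasFDeriv (σ : (Fin 4 → ℂ) → ℂ) (hσ : AnalyticOnNhd ℂ σ Set.univ)
    (hnv : ∀ p, σ p ≠ 0) (j : Fin 4) (p : Fin 4 → ℂ) : HasFDerivAt (lgd σ j)
      (pdx j σ p • (-(σ p ^ 2)⁻¹ • fderiv ℂ σ p) + (σ p)⁻¹ • fderiv ℂ (pdx j σ) p) p := by
  have h1 := (hasDerivAt_inv (hnv p)).comp_hasFDerivAt p
    (hσ p trivial).differentiableAt.hasFDerivAt
  have h2 := (pdx_diff σ hσ j p).hasFDerivAt.mul h1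
  have e : lgd σ j = pdx j σ * (Inv.inv ∘ σ) := by
    ext q; simp [lgd, div_eq_mul_inv]
  rw [e]
  exact h2

lemma lgd_diff (σ : (Fin 4 → ℂ) → ℂ) (hσ : AnalyticOnNhd ℂ σ Set.univ) (hnv : ∀ p, σ p ≠ 0)
    (j : Fin 4) : Differentiable ℂ (lgd σ j) := fun p =>
  (lgd_hasFDeriv σ hσ hnv j p).differentiableAt

lemma pdx_pdx (σ : (Fin 4 → ℂ) → ℂ) (hσ : AnalyticOnNhd ℂ σ Set.univ) (i j : Fin 4)
    (p : Fin 4 → ℂ) :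
    pdx i (pdx j σ) p = fderiv ℂ (fderiv ℂ σ) p (Pi.single i 1) (Pi.single j 1) := by
  have h : DifferentiableAt ℂ (fderiv ℂ σ) p := (hσ.fderiv p trivial).differentiableAt
  have h2 := h.hasFDerivAt.clm_apply (hasFDerivAt_const (Pi.single j (1:ℂ) : Fin 4 → ℂ) p)
  have h3 : fderiv ℂ (pdx j σ) p = _ := h2.fderiv
  unfold pdx at h3 ⊢
  rw [h3]; simp

lemma pdx_lgd (σ : (Fin 4 → ℂ) → ℂ) (hσ : AnalyticOnNhd ℂ σ Set.univ) (hnv : ∀ p, σ p ≠ 0)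
    (i j : Fin 4) (p : Fin 4 → ℂ) :
    pdx i (lgd σ j) p = (pdx i (pdx j σ) p * σ p - pdx j σ p * pdx i σ p) / σ p ^ 2 := by
  have hp := hnv p
  rw [pdx, (lgd_hasFDeriv σ hσ hnv j p).fderiv]
  simp only [ContinuousLinearMap.add_apply, ContinuousLinearMap.smul_apply, smul_eq_mul]
  simp only [pdx]
  field_simp
  ring

lemma lgd_symm (σ : (Fin 4 → ℂ) → ℂ) (hσ : AnalyticOnNhd ℂ σ Set.univ) (hnv : ∀ p, σ p ≠ 0)
    (i j : Fin 4) (p : Fin 4 → ℂ) : pdx i (lgd σ j) p = pdx j (lgd σ i) p := by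
  have hs : IsSymmSndFDerivAt ℂ σ p :=
    ContDiffAt.isSymmSndFDerivAt (n := ⊤) (hσ p trivial).contDiffAt (by simp)
  rw [pdx_lgd σ hσ hnv, pdx_lgd σ hσ hnv, pdx_pdx σ hσ, pdx_pdx σ hσ, hs.eq]
  ring

lemma clm_ext4 (L : (Fin 4 → ℂ) →L[ℂ] ℂ) (v : Fin 4 → ℂ) :
    L v = v 0 * L (Pi.single 0 1) + v 1 * L (Pi.single 1 1) + v 2 * L (Pi.single 2 1)
      + v 3 * L (Pi.single 3 1) := by
  have : v = v 0 • Pi.single 0 (1:ℂ) + v 1 • Pi.single 1 1 + v 2 • Pi.single 2 1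
      + v 3 • Pi.single 3 1 := by
    ext i; fin_cases i <;> simp
  conv_lhs => rw [this]
  simp only [map_add, map_smul, smul_eq_mul]

lemma const_of_pdx (f : (Fin 4 → ℂ) → ℂ) (hf : Differentiable ℂ f) (h : ∀ i p, pdx i f p = 0)
    (p : Fin 4 → ℂ) : f p = f 0 := by
  refine is_const_of_fderiv_eq_zero (𝕜 := ℂ) hf (fun x => ?_) p 0
  ext v
  have := fun i => h i x
  simp only [pdx] at this
  rw [clm_ext4]; simp [this]

lemma hasFDeriv_exp (m a b : ℂ) (p : Fin 4 → ℂ) :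
    HasFDerivAt (fun q : Fin 4 → ℂ => Complex.exp (m + a * q 3 + b * (q 1 + q 2)))
      (Complex.exp (m + a * p 3 + b * (p 1 + p 2)) •
        (a • ContinuousLinearMap.proj (R := ℂ) (φ := fun _ : Fin 4 => ℂ) 3 +
          b • (ContinuousLinearMap.proj (R := ℂ) (φ := fun _ : Fin 4 => ℂ) 1 +
            ContinuousLinearMap.proj (R := ℂ) (φ := fun _ : Fin 4 => ℂ) 2))) p := by
  have h (i : Fin 4) : HasFDerivAt (fun q : Fin 4 → ℂ => q i)
    (ContinuousLinearMap.proj (R := ℂ) (φ := fun _ : Fin 4 => ℂ) i) p := hasFDerivAt_apply i p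
  exact ((((h 3).const_mul a).const_add m).add (((h 1).add (h 2)).const_mul b)).cexp

theorem stmt10 (σ : (Fin 4 → ℂ) → ℂ)
    (hσ : AnalyticOnNhd ℂ σ Set.univ) (hnv : ∀ p, σ p ≠ 0) :
    ((∀ p, pdx 0 σ p = 0) ∧ (∀ p, pdc σ p = 0) ∧
     (∀ p, pda (fun q => pda σ q / σ q) p = 0) ∧
     (∀ p, pdb (fun q => pda σ q / σ q) p = 0) ∧
     (∀ p, pdb (fun q => pdb σ q / σ q) p = 0)) ↔
    ∃ μ₀ μ₁ μ₂ : ℂ, ∀ p, σ p = Complex.exp (μ₀ + μ₁ * p 3 + μ₂ * (p 1 + p 2)) := by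
  constructor
  · rintro ⟨h0, hc, haa, hba, hbb⟩
    have hA : (fun q => pda σ q / σ q) = fun q => -lgd σ 2 q - lgd σ 3 q := by
      ext q; simp only [pda, lgd]; ring
    have hD := lgd_diff σ hσ hnv
    have hS := lgd_symm σ hσ hnv
    have hpA (i : Fin 4) (p) : pdx i (fun q => -lgd σ 2 q - lgd σ 3 q) p
        = -pdx i (lgd σ 2) p - pdx i (lgd σ 3) p := by
      have := ((hD 2 p).hasFDerivAt.fun_neg.fun_sub (hD 3 p).hasFDerivAt).fderiv
      simp only [pdx]
      rw [this]; simp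
    rw [hA] at haa hba
    have l0 : lgd σ 0 = fun _ => 0 := by ext q; simp [lgd, h0]
    have l1 : lgd σ 1 = lgd σ 2 := by
      ext q; simp only [lgd]; rw [sub_eq_zero.1 (hc q)]
    have a0 (i p) : pdx i (lgd σ 0) p = 0 := by rw [l0]; simp [pdx]
    have a22 (p) : pdx 2 (lgd σ 2) p = 0 := hbb p
    have a23 (p) : pdx 2 (lgd σ 3) p = 0 := by
      have := hba p
      rw [pdb, hpA, a22] at this
      linear_combination -this
    have a32 (p) : pdx 3 (lgd σ 2) p = 0 := by rw [hS, a23]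
    have a33 (p) : pdx 3 (lgd σ 3) p = 0 := by
      have := haa p
      rw [pda, hpA, hpA, a22, a23, a32] at this
      linear_combination this
    have a12 (p) : pdx 1 (lgd σ 2) p = 0 := by rw [hS, l1, a22]
    have a13 (p) : pdx 1 (lgd σ 3) p = 0 := by rw [hS, l1, a32]
    have k2 := const_of_pdx (lgd σ 2) (hD 2) (fun i p => by
      fin_cases i
      · exact (hS 0 2 p).trans (a0 2 p)
      · exact a12 p
      · exact a22 p
      · exact a32 p)
    have k3 := const_of_pdx (lgd σ 3) (hD 3) (fun i p => by
      fin_cases i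
      · exact (hS 0 3 p).trans (a0 3 p)
      · exact a13 p
      · exact a23 p
      · exact a33 p)
    have e2 (p) : pdx 2 σ p = lgd σ 2 0 * σ p := by
      rw [← k2 p, lgd, div_mul_cancel₀ _ (hnv p)]
    have e3 (p) : pdx 3 σ p = lgd σ 3 0 * σ p := by
      rw [← k3 p, lgd, div_mul_cancel₀ _ (hnv p)]
    have e1 (p) : pdx 1 σ p = lgd σ 2 0 * σ p := by
      rw [← e2 p]; exact sub_eq_zero.1 (hc p)
    generalize lgd σ 2 0 = b at *
    generalize lgd σ 3 0 = a at *
    have hF (p) := (hσ p trivial).differentiableAt.hasFDerivAt.fun_mul (hasFDeriv_exp 0 (-a) (-b) p)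
    have kF := const_of_pdx _ (fun p => (hF p).differentiableAt) (fun i p => by
      rw [pdx, (hF p).fderiv]
      have h0 := h0 p
      have e1 := e1 p
      have e2 := e2 p
      have e3 := e3 p
      simp only [pdx] at h0 e1 e2 e3
      fin_cases i <;> simp [h0, e1, e2, e3] <;> ring)
    refine ⟨Complex.log (σ 0), a, b, fun p => ?_⟩
    have := kF p
    simp only [Pi.zero_apply, mul_zero, add_zero, Complex.exp_zero, mul_one] at this
    rw [add_assoc, Complex.exp_add, Complex.exp_log (hnv 0), ← this, mul_assoc, ← Complex.exp_add]
    ring_nf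
    simp
  · rintro ⟨m, a, b, h⟩
    obtain rfl : σ = fun p => Complex.exp (m + a * p 3 + b * (p 1 + p 2)) := funext h
    have hx (i p) := congrArg (fun L => L (Pi.single i (1:ℂ))) (hasFDeriv_exp m a b p).fderiv
    have q2 (p) : pdx 2 (fun p => Complex.exp (m + a * p 3 + b * (p 1 + p 2))) p = 
       Complex.exp (m + a * p 3 + b * (p 1 + p 2)) * b := by
      rw [pdx]; refine (hx 2 p).trans ?_; simp
    have q1 (p) : pdx 1 (fun p => Complex.exp (m + a * p 3 + b * (p 1 + p 2))) p = 
       Complex.exp (m + a * p 3 + b * (p 1 + p 2)) * b := by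
      rw [pdx]; refine (hx 1 p).trans ?_; simp
    have q3 (p) : pdx 3 (fun p => Complex.exp (m + a * p 3 + b * (p 1 + p 2))) p = 
       Complex.exp (m + a * p 3 + b * (p 1 + p 2)) * a := by
      rw [pdx]; refine (hx 3 p).trans ?_; simp
    have q0 (p) : pdx 0 (fun p => Complex.exp (m + a * p 3 + b * (p 1 + p 2))) p = 0 := by
      rw [pdx]; refine (hx 0 p).trans ?_; simp
    have hA : (fun q => pda (fun p => Complex.exp (m + a * p 3 + b * (p 1 + p 2))) q /
        Complex.exp (m + a * q 3 + b * (q 1 + q 2))) = fun _ => - b - a := by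
      ext q
      rw [pda, q2, q3, div_eq_iff (Complex.exp_ne_zero _)]; ring
    have hB : (fun q => pdb (fun p => Complex.exp (m + a * p 3 + b * (p 1 + p 2))) q /
        Complex.exp (m + a * q 3 + b * (q 1 + q 2))) = fun _ => b := by
      ext q
      rw [pdb, q2, div_eq_iff (Complex.exp_ne_zero _)]; ring
    refine ⟨q0, fun p => ?_, fun p => ?_, fun p => ?_, fun p => ?_⟩
    · rw [pdc, q1, q2, sub_self]
    · simp only [hA]; simp [pda, pdx]
    · simp only [hA]; simp [pdb, pdx]
    · simp only [hB]; simp [pdb, pdx]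
end

section
/- Let F denote the Gauss hypergeometric function, defined on Ω = { (x, α, β, γ) ∈ ℂ⁴ : |x| < 1 and γ ≠ -n for all natural numbers n } by the convergent series F(x,α,β,γ) = ∑_{n=0}^∞ ((α)_n (β)_n / (γ)_n) · xⁿ/n!. Then F satisfies no nonzero algebraic partial differential equation with respect to the parameters α, β, γ: for every nonzero polynomial P with complex coefficients in the variables X, A, B, C and finitely many of the variables Y_{ijk} indexed by (i,j,k) ∈ ℕ³, there exists a point (x, α, β, γ) ∈ Ω at which substituting X = x, A = α, B = β, C = γ and Y_{ijk} = ∂^{i+j+k}F/∂α^i ∂β^j ∂γ^k evaluated at (x, α, β, γ) gives a nonzero value. Equivalently, the family of all partial derivatives of F with respect to the parameters α, β, γ is algebraically independent over the field of rational functions ℂ(x, α, β, γ). -/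
/-- Partial derivative operator in the `i`-th coordinate direction on `ℂ⁴`, whose
coordinates `(x, α, β, γ)` are indexed by `0, 1, 2, 3 : Fin 4`. -/
noncomputable def pd15 (i : Fin 4) (f : (Fin 4 → ℂ) → ℂ) : (Fin 4 → ℂ) → ℂ :=
  fun p => fderiv ℂ f p (Pi.single i 1)

/-- The Gauss hypergeometric function `F(x,α,β,γ) = ∑ₙ ((α)ₙ(β)ₙ/(γ)ₙ)·xⁿ/n!` as a function
of `(x,α,β,γ) : Fin 4 → ℂ`. -/
noncomputable def hgF15 : (Fin 4 → ℂ) → ℂ := fun p =>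
  ∑' n : ℕ, ((ascPochhammer ℂ n).eval (p 1) * (ascPochhammer ℂ n).eval (p 2) /
    (ascPochhammer ℂ n).eval (p 3)) * p 0 ^ n / n.factorial

/-- The iterated parameter derivative `∂^{i+j+k}F/∂α^i ∂β^j ∂γ^k` of the hypergeometric
function. -/
noncomputable def hgDeriv15 (i j k : ℕ) : (Fin 4 → ℂ) → ℂ :=
  (pd15 1)^[i] ((pd15 2)^[j] ((pd15 3)^[k] hgF15))

namespace HG15
open Polynomial

/-- A `1`-periodic ratio of polynomials is constant. -/
lemma periodic_const (p q : ℂ[X]) (hq : q ≠ 0)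
    (h : p.comp (X + 1) * q = p * q.comp (X + 1)) : ∃ c : ℂ, p = C c * q := by
  have hfin : {n : ℕ | q.eval (n : ℂ) = 0}.Finite := by
    have := (q.roots.toFinset.finite_toSet).preimage (f := fun n : ℕ => (n : ℂ))
      (Nat.cast_injective.injOn)
    refine this.subset ?_
    intro n hn
    simp only [Set.mem_preimage, Finset.mem_coe, Multiset.mem_toFinset]
    exact (mem_roots hq).2 hn
  obtain ⟨n0, hn0⟩ := hfin.bddAbove
  have hne : ∀ n : ℕ, n0 < n → q.eval (n : ℂ) ≠ 0 := by
    intro n hn h0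
    exact absurd (hn0 h0) (by omega)
  set c := p.eval ((n0 + 1 : ℕ) : ℂ) / q.eval ((n0 + 1 : ℕ) : ℂ) with hc
  have key : ∀ d : ℕ, p.eval ((n0 + 1 + d : ℕ) : ℂ) = c * q.eval ((n0 + 1 + d : ℕ) : ℂ) := by
    intro d
    induction d with
    | zero => simp only [add_zero]; rw [hc, div_mul_cancel₀ _ (hne _ (by omega))]
    | succ d ih =>
      have h1 := congrArg (eval ((n0 + 1 + d : ℕ) : ℂ)) h
      simp only [eval_mul, eval_comp, eval_add, eval_X, eval_one] at h1
      have e : (((n0 + 1 + (d + 1) : ℕ)) : ℂ) = ((n0 + 1 + d : ℕ) : ℂ) + 1 := by push_cast; ring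
      rw [e]
      have h2 := hne (n0 + 1 + d) (by omega)
      rw [ih] at h1
      apply mul_right_cancel₀ h2
      rw [h1]; ring
  refine ⟨c, ?_⟩
  rw [← sub_eq_zero]
  apply eq_zero_of_infinite_isRoot
  have : Set.Infinite (Set.range (fun d : ℕ => ((n0 + 1 + d : ℕ) : ℂ))) := by
    apply Set.infinite_range_of_injective
    intro a b hab
    simp only [Nat.cast_inj] at hab
    omega
  refine this.mono ?_
  rintro _ ⟨d, rfl⟩
  simp only [Set.mem_ofPred_eq, IsRoot.def, eval_sub, eval_mul, eval_C]
  rw [key d, sub_self]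

lemma asc_factor (n l : ℕ) (h : l < n) : ∃ p : ℂ[X], ascPochhammer ℂ n = (X + C (l : ℂ)) * p ∧
    p.eval (-(l : ℂ)) ≠ 0 := by
  induction n with
  | zero => omega
  | succ n ih =>
    rw [ascPochhammer_succ_right]
    by_cases hl : l = n
    · subst hl
      refine ⟨ascPochhammer ℂ l, by simp [mul_comm], ?_⟩
      intro h0
      rw [ascPochhammer_eval_eq_zero_iff] at h0
      obtain ⟨k, hk, hk'⟩ := h0
      simp only [neg_neg, Nat.cast_inj] at hk'
      omega
    · obtain ⟨p, hp, hp'⟩ := ih (by omega)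
      refine ⟨p * (X + (n : ℂ[X])), by rw [hp]; ring, ?_⟩
      simp only [eval_mul, eval_add, eval_X, eval_natCast]
      refine mul_ne_zero hp' ?_
      intro h0
      apply hl
      have : (l : ℂ) = n := by linear_combination -h0
      exact_mod_cast this

lemma asc_deriv_ne (n l : ℕ) (h : l < n) :
    (derivative (ascPochhammer ℂ n)).eval (-(l : ℂ)) ≠ 0 := by
  obtain ⟨p, hp, hp'⟩ := asc_factor n l h
  rw [hp]
  simpa using hp'

lemma asc_root (n l : ℕ) (h : l < n) : (ascPochhammer ℂ n).eval (-(l : ℂ)) = 0 := by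
  obtain ⟨p, hp, hp'⟩ := asc_factor n l h
  rw [hp]; simp

/-- the shifted Pochhammer polynomial -/
lemma asc_shift (n : ℕ) : X * (ascPochhammer ℂ n).comp (X + 1) =
    (X + (n : ℂ[X])) * ascPochhammer ℂ n := by
  rw [← ascPochhammer_succ_left, ascPochhammer_succ_right, mul_comm]

lemma asc_shift_deriv (n i : ℕ) :
    X * derivative^[i+1] ((ascPochhammer ℂ n).comp (X + 1))
      + (i + 1 : ℂ[X]) * derivative^[i] ((ascPochhammer ℂ n).comp (X + 1)) =
    (X + (n : ℂ[X])) * derivative^[i+1] (ascPochhammer ℂ n)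
      + (i + 1 : ℂ[X]) * derivative^[i] (ascPochhammer ℂ n) := by
  induction i with
  | zero =>
    have := congrArg derivative (asc_shift n)
    simp only [derivative_mul, derivative_X, derivative_add, derivative_natCast] at this
    simp only [zero_add, Function.iterate_one, Function.iterate_zero, id, Nat.cast_zero]
    linear_combination this
  | succ i ih =>
    have := congrArg derivative ih
    have hz : derivative (i + 1 : ℂ[X]) = 0 := by
      simp [derivative_add, derivative_natCast]
    simp only [derivative_mul, derivative_X, derivative_add (R := ℂ) (f := X * _),
      derivative_add (R := ℂ) (f := (X + (n : ℂ[X])) * _), hz] at this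
    simp only [derivative_add, derivative_X, derivative_natCast] at this
    simp only [Function.iterate_succ_apply'] at this ⊢
    push_cast
    linear_combination this

/-- Coefficients expressing derivatives of the shift. -/
noncomputable def G (n : ℕ) : ℕ → ℕ → ℂ[X]
  | 0, j => if j = 0 then X + (n : ℂ[X]) else 0
  | i + 1, j => (if j = i + 1 then X ^ (i + 1) * (X + (n : ℂ[X])) else
      if j = i then (i + 1 : ℂ[X]) * X ^ (i + 1) else 0) - (i + 1 : ℂ[X]) * G n i j

lemma G_gt (n i j : ℕ) (h : i < j) : G n i j = 0 := by
  induction i with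
  | zero => simp [G]; omega
  | succ i ih =>
    rw [G, ih (by omega), if_neg (by omega), if_neg (by omega)]; simp

lemma G_self (n i : ℕ) : G n i i = X ^ i * (X + (n : ℂ[X])) := by
  cases i with
  | zero => simp [G]
  | succ i => rw [G, G_gt n i (i+1) (by omega), if_pos rfl]; simp

lemma G_pred (n i : ℕ) : G n (i + 1) i = - ((i + 1 : ℂ[X]) * (n : ℂ[X]) * X ^ i) := by
  rw [G, G_self, if_neg (by omega), if_pos rfl]; ring

lemma G_deg (n i j : ℕ) : (G n i j).natDegree ≤ i + 1 := by
  induction i with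
  | zero =>
    rw [G]; split_ifs
    · compute_degree
    · simp
  | succ i ih =>
    rw [G]
    refine (natDegree_sub_le _ _).trans (max_le ?_ ?_)
    · split_ifs
      · have : (X ^ (i + 1) * (X + (n : ℂ[X]))).natDegree ≤ (i + 1) + 1 := by
          refine natDegree_mul_le_of_le ?_ ?_ <;> compute_degree
        exact this
      · have : ((i + 1 : ℂ[X]) * X ^ (i + 1)).natDegree ≤ 0 + (i + 1) := by
          refine natDegree_mul_le_of_le ?_ ?_ <;> compute_degree
        omega
      · simp
    · have : ((i + 1 : ℂ[X]) * G n i j).natDegree ≤ 0 + (i + 1) := by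
        refine natDegree_mul_le_of_le ?_ ih
        compute_degree
      omega

lemma G_spec (n i M : ℕ) (h : i < M) :
    X ^ (i + 1) * derivative^[i] ((ascPochhammer ℂ n).comp (X + 1)) =
    ∑ j ∈ Finset.range M, G n i j * derivative^[j] (ascPochhammer ℂ n) := by
  induction i with
  | zero =>
    simp only [G, ite_mul, zero_mul]
    rw [Finset.sum_ite_eq' _ 0, if_pos (by simpa using h)]
    simpa using asc_shift n
  | succ i ih =>
    have h1 := ih (by omega)
    have h2 := asc_shift_deriv n i
    have h3 : ∑ j ∈ Finset.range M, G n (i+1) j * derivative^[j] (ascPochhammer ℂ n) =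
        X ^ (i + 1) * (X + (n : ℂ[X])) * derivative^[i+1] (ascPochhammer ℂ n) +
        (i + 1 : ℂ[X]) * X ^ (i + 1) * derivative^[i] (ascPochhammer ℂ n) -
        (i + 1 : ℂ[X]) * ∑ j ∈ Finset.range M, G n i j * derivative^[j] (ascPochhammer ℂ n) := by
      have e : ∀ j, G n (i+1) j * derivative^[j] (ascPochhammer ℂ n) =
          (if j = i + 1 then X ^ (i + 1) * (X + (n : ℂ[X])) * derivative^[j] (ascPochhammer ℂ n)
            else 0) +
          (if j = i then (i + 1 : ℂ[X]) * X ^ (i + 1) * derivative^[j] (ascPochhammer ℂ n) else 0)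
          - (i + 1 : ℂ[X]) * (G n i j * derivative^[j] (ascPochhammer ℂ n)) := by
        intro j
        rw [G]
        by_cases h1 : j = i + 1
        · have h2 : j ≠ i := by omega
          simp only [if_pos h1, if_neg h2]; ring
        · by_cases h2 : j = i
          · simp only [if_pos h2, if_neg h1]; ring
          · simp only [if_neg h2, if_neg h1]; ring
      simp only [e, Finset.sum_sub_distrib, Finset.sum_add_distrib, Finset.sum_ite_eq',
        Finset.mem_range, ← Finset.mul_sum]
      rw [if_pos h, if_pos (by omega)]
    rw [h3, ← h1]
    linear_combination X ^ (i+1) * h2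

lemma iter_deriv_comp (p : ℂ[X]) (i : ℕ) :
    derivative^[i] (p.comp (X + 1)) = (derivative^[i] p).comp (X + 1) := by
  induction i with
  | zero => rfl
  | succ i ih =>
    rw [Function.iterate_succ_apply', ih, Function.iterate_succ_apply', derivative_comp]
    simp

lemma natDegree_shift (p : ℂ[X]) : (p.comp (X + 1)).natDegree = p.natDegree := by
  rw [natDegree_comp]
  have : (X + 1 : ℂ[X]).natDegree = 1 := by
    have := natDegree_X_add_C (1 : ℂ); simpa using this
  rw [this, mul_one]

/-- The key contradiction. -/
lemma no_rational_solution (n N : ℕ) (a b : ℂ[X]) (ha : a.natDegree < n)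
    (h : a * (-((N + 1 : ℂ[X]) * (n : ℂ[X]) * a.comp (X + 1)) + b.comp (X + 1) * X * (X + (n : ℂ[X]))) =
      a.comp (X + 1) * X * (X + (n : ℂ[X])) * b) : a = 0 := by
  by_contra ha0
  set u := ascPochhammer ℂ n with hu
  have hu0 : u ≠ 0 := (monic_ascPochhammer ℂ n).ne_zero
  have s1 := asc_shift n
  have s2 := asc_shift_deriv n 0
  rw [iter_deriv_comp] at s2
  simp only [zero_add, Function.iterate_one, Function.iterate_zero, id, Nat.cast_zero] at s2
  obtain ⟨c, hc⟩ := periodic_const (b * u + (N + 1 : ℂ[X]) * derivative u * a) (u * a)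
    (mul_ne_zero hu0 ha0) (by
      have hx : (X ^ 2 : ℂ[X]) ≠ 0 := pow_ne_zero _ X_ne_zero
      apply mul_left_cancel₀ hx
      have e : (N + 1 : ℂ[X]).comp (X + 1) = (N + 1 : ℂ[X]) := by simp
      simp only [mul_comp, add_comp, natCast_comp, one_comp]
      rw [← hu] at s1 s2
      generalize u.comp (X + 1) = s at *
      generalize (derivative u).comp (X + 1) = s' at *
      generalize a.comp (X + 1) = a' at *
      generalize b.comp (X + 1) = b' at *
      linear_combination u ^ 2 * h + (X * b' * u * a - X * (b * u + (N + 1) * derivative u * a) * a'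
         - (N + 1) * a' * u * a) * s1 + X * u * a * (N + 1) * a' * s2)
  apply ha0
  refine eq_zero_of_natDegree_lt_card_of_eval_eq_zero a (ι := Fin n)
    (f := fun l => -((l : ℕ) : ℂ)) ?_ ?_ (by simpa using ha)
  · intro x y hxy
    simp only [neg_inj, Nat.cast_inj] at hxy
    exact Fin.ext hxy
  · intro l
    have h1 := congrArg (eval (-((l : ℕ) : ℂ))) hc
    simp only [eval_add, eval_mul, eval_C, hu, asc_root n l l.2, eval_natCast, eval_one] at h1
    have h2 := asc_deriv_ne n l l.2
    have h3 : ((N : ℂ) + 1) ≠ 0 := by exact_mod_cast Nat.succ_ne_zero N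
    have h4 : ((N : ℂ) + 1) * eval (-((l : ℕ) : ℂ)) (derivative (ascPochhammer ℂ n)) *
      eval (-((l : ℕ) : ℂ)) a = 0 := by linear_combination h1
    simpa [h2, h3] using h4

/-- Linear independence of the derivatives of the Pochhammer polynomial over polynomials of
bounded degree. -/
lemma indep_one (N : ℕ) : ∀ D : ℕ, ∃ n0 : ℕ, ∀ n, n0 ≤ n → ∀ A : ℕ → ℂ[X],
    (∀ i, (A i).natDegree ≤ D) →
    ∑ i ∈ Finset.range N, A i * derivative^[i] (ascPochhammer ℂ n) = 0 →
    ∀ i < N, A i = 0 := by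
  induction N with
  | zero => intro D; exact ⟨0, fun n _ A _ _ i hi => by omega⟩
  | succ N ih =>
    cases N with
    | zero =>
      intro D
      refine ⟨0, fun n _ A _ h i hi => ?_⟩
      obtain rfl : i = 0 := by omega
      simp only [zero_add, Finset.sum_range_one, Function.iterate_zero, id, mul_eq_zero] at h
      exact h.resolve_right (monic_ascPochhammer ℂ n).ne_zero
    | succ N =>
      intro D
      obtain ⟨n1, h1⟩ := ih D
      obtain ⟨n2, h2⟩ := ih (2 * D + N + 2)
      refine ⟨n1 + n2 + D + 1, fun n hn A hA h => ?_⟩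
      suffices ha : A (N + 1) = 0 by
        rw [Finset.sum_range_succ, ha, zero_mul, add_zero] at h
        have := h1 n (by omega) A hA h
        intro i hi
        by_cases hi' : i = N + 1
        · rw [hi', ha]
        · exact this i (by omega)
      set a := A (N + 1) with ha
      set τ : ℂ[X] → ℂ[X] := fun p => p.comp (X + 1) with hτ
      set u := ascPochhammer ℂ n with hu
      let S : ℕ → ℂ[X] := fun j => ∑ i ∈ Finset.range (N + 2), τ (A i) * X ^ (N + 1 - i) * G n i j
      let B : ℕ → ℂ[X] := fun j => a * S j - τ a * (X ^ (N + 1) * (X + (n : ℂ[X]))) * A j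
      have hshift : ∑ i ∈ Finset.range (N + 2), τ (A i) * derivative^[i] (τ u) = 0 := by
        have := congrArg τ h
        simp only [hτ, Polynomial.sum_comp, mul_comp, zero_comp] at this
        simpa only [hτ, iter_deriv_comp] using this
      have hS : ∑ j ∈ Finset.range (N + 2), S j * derivative^[j] u = 0 := by
        have : ∑ j ∈ Finset.range (N + 2), S j * derivative^[j] u =
            X ^ (N + 2) * ∑ i ∈ Finset.range (N + 2), τ (A i) * derivative^[i] (τ u) := by
          simp only [S, Finset.sum_mul, Finset.mul_sum]
          rw [Finset.sum_comm]
          refine Finset.sum_congr rfl fun i hi => ?_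
          have hi' : i < N + 2 := Finset.mem_range.1 hi
          have e := G_spec n i (N + 2) hi'
          have e2 : (X : ℂ[X]) ^ (N + 2) = X ^ (N + 1 - i) * X ^ (i + 1) := by
            rw [← pow_add]; congr 1; omega
          rw [e2]
          have : X ^ (N + 1 - i) * X ^ (i + 1) * (τ (A i) * derivative^[i] (τ u)) =
            τ (A i) * X ^ (N + 1 - i) * (X ^ (i + 1) * derivative^[i] (τ u)) := by ring
          rw [this]
          simp only [hτ, hu]
          rw [e, Finset.mul_sum]
          refine Finset.sum_congr rfl fun j _ => ?_
          ring
        rw [this, hshift, mul_zero]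
      have hB : ∑ j ∈ Finset.range (N + 2), B j * derivative^[j] u = 0 := by
        have : ∑ j ∈ Finset.range (N + 2), B j * derivative^[j] u =
          a * (∑ j ∈ Finset.range (N + 2), S j * derivative^[j] u) -
          τ a * (X ^ (N + 1) * (X + (n : ℂ[X]))) *
            ∑ j ∈ Finset.range (N + 2), A j * derivative^[j] u := by
          rw [Finset.mul_sum, Finset.mul_sum, ← Finset.sum_sub_distrib]
          refine Finset.sum_congr rfl fun j _ => ?_
          simp only [B]; ring
        rw [this, hS, h]; simp
      have hStop : S (N + 1) = τ a * (X ^ (N + 1) * (X + (n : ℂ[X]))) := by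
        simp only [S]
        rw [Finset.sum_range_succ, Finset.sum_eq_zero, G_self]
        · simp [ha]
        · intro i hi
          rw [G_gt n i (N + 1) (Finset.mem_range.1 hi), mul_zero]
      have hSN : S N = τ (A N) * X * (X ^ N * (X + (n : ℂ[X]))) -
          τ a * ((N + 1 : ℂ[X]) * (n : ℂ[X]) * X ^ N) := by
        simp only [S]
        rw [Finset.sum_range_succ, Finset.sum_range_succ, Finset.sum_eq_zero, G_self, G_pred]
        · simp [ha]; ring
        · intro i hi
          rw [G_gt n i N (Finset.mem_range.1 hi), mul_zero]
      have hBtop : B (N + 1) = 0 := by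
        simp only [B, hStop]; ring
      rw [Finset.sum_range_succ, hBtop, zero_mul, add_zero] at hB
      have hdτ : ∀ i, (τ (A i)).natDegree ≤ D := fun i => by
        simp only [hτ]; rw [natDegree_shift]; exact hA i
      have hXn : ((X : ℂ[X]) + (n : ℂ[X])).natDegree ≤ 1 := by compute_degree
      have hSdeg : ∀ j, (S j).natDegree ≤ D + N + 2 := by
        intro j
        refine natDegree_sum_le_of_forall_le _ _ fun i hi => ?_
        have hi' : i < N + 2 := Finset.mem_range.1 hi
        have := natDegree_mul_le_of_le (natDegree_mul_le_of_le (hdτ i)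
          (natDegree_X_pow_le (R := ℂ) (N + 1 - i))) (G_deg n i j)
        omega
      have hBdeg : ∀ j, (B j).natDegree ≤ 2 * D + N + 2 := by
        intro j
        refine (natDegree_sub_le _ _).trans (max_le ?_ ?_)
        · have := natDegree_mul_le_of_le (hA (N + 1)) (hSdeg j)
          simp only [ha]; omega
        · have := natDegree_mul_le_of_le (natDegree_mul_le_of_le (hdτ (N + 1))
            (natDegree_mul_le_of_le (natDegree_X_pow_le (R := ℂ) (N + 1)) hXn)) (hA j)
          simp only [ha]; omega
      have hBN := h2 n (by omega) B hBdeg hB N (by omega)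
      refine no_rational_solution n N a (A N) ((hA _).trans_lt (by omega)) ?_
      simp only [B, hSN] at hBN
      have hx : (X ^ N : ℂ[X]) ≠ 0 := pow_ne_zero _ X_ne_zero
      apply mul_left_cancel₀ hx
      simp only [hτ] at hBN
      linear_combination hBN

end HG15

namespace HG15
open Polynomial

/-- Evaluation of a trivariate polynomial. -/
noncomputable def ev (α β γ : ℂ) : ℂ[X][X][X] →+* ℂ :=
  (evalRingHom γ).comp ((evalRingHom (C β)).comp (evalRingHom (C (C α))))

lemma eval_map_ev (α β γ : ℂ) (Q : ℂ[X][X][X]) :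
    (Q.map ((evalRingHom γ).comp (evalRingHom (C β)))).eval α = ev α β γ Q := by
  have h : ((evalRingHom α).comp (mapRingHom ((evalRingHom γ).comp (evalRingHom (C β))))) =
      ev α β γ := by
    apply Polynomial.ringHom_ext
    · intro a; simp [ev]
    · simp [ev]
  exact DFunLike.congr_fun h Q

lemma eval_map_ev2 (β γ : ℂ) (Q : ℂ[X][X]) :
    (Q.map (evalRingHom γ)).eval β = (Q.eval (C β)).eval γ := by
  have h : ((evalRingHom β).comp (mapRingHom (evalRingHom γ))) =
      (evalRingHom γ).comp (evalRingHom (C β)) := by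
    apply Polynomial.ringHom_ext
    · intro a; simp
    · simp
  exact DFunLike.congr_fun h Q

lemma indep_two (N v : ℕ) (Q : ℕ → ℕ → ℂ[X][X][X]) (lam : ℕ → ℕ → ℕ → ℂ)
    (hlam : ∀ m, v ≤ m → ∀ i j, lam m i j ≠ 0)
    (h : ∀ m, v ≤ m → ∀ α β : ℂ, ∑ i ∈ Finset.range N, ∑ j ∈ Finset.range N,
      lam m i j * ev α β (-(m : ℂ)) (Q i j) * (derivative^[i] (ascPochhammer ℂ (m + 1))).eval α *
        (derivative^[j] (ascPochhammer ℂ (m + 1))).eval β = 0) :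
    ∀ i < N, ∀ j < N, Q i j = 0 := by
  obtain ⟨D1, hD1⟩ : ∃ D, ∀ i < N, ∀ j < N, (Q i j).natDegree ≤ D := by
    refine ⟨∑ i ∈ Finset.range N, ∑ j ∈ Finset.range N, (Q i j).natDegree, fun i hi j hj => ?_⟩
    refine le_trans ?_ (Finset.single_le_sum (f := fun i => ∑ j ∈ Finset.range N,
      (Q i j).natDegree) (fun _ _ => Nat.zero_le _) (Finset.mem_range.2 hi))
    exact Finset.single_le_sum (f := fun j => (Q i j).natDegree) (fun _ _ => Nat.zero_le _)
      (Finset.mem_range.2 hj)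
  obtain ⟨D2, hD2⟩ : ∃ D, ∀ i < N, ∀ j < N, ∀ e, ((Q i j).coeff e).natDegree ≤ D := by
    refine ⟨∑ i ∈ Finset.range N, ∑ j ∈ Finset.range N, ∑ e ∈ (Q i j).support,
      ((Q i j).coeff e).natDegree, fun i hi j hj e => ?_⟩
    by_cases he : e ∈ (Q i j).support
    · refine le_trans ?_ (Finset.single_le_sum (f := fun i => ∑ j ∈ Finset.range N,
        ∑ e ∈ (Q i j).support, ((Q i j).coeff e).natDegree)
        (fun _ _ => Nat.zero_le _) (Finset.mem_range.2 hi))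
      refine le_trans ?_ (Finset.single_le_sum (f := fun j =>
        ∑ e ∈ (Q i j).support, ((Q i j).coeff e).natDegree)
        (fun _ _ => Nat.zero_le _) (Finset.mem_range.2 hj))
      exact Finset.single_le_sum (f := fun e => ((Q i j).coeff e).natDegree)
        (fun _ _ => Nat.zero_le _) he
    · rw [notMem_support_iff.1 he]; simp
  obtain ⟨n1, hn1⟩ := indep_one N D1
  obtain ⟨n2, hn2⟩ := indep_one N D2
  have main : ∀ m, n1 + n2 + v ≤ m → ∀ i < N, ∀ j < N, ∀ e e',
      (((Q i j).coeff e).coeff e').eval (-(m : ℂ)) = 0 := by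
    intro m hm
    have step1 : ∀ β : ℂ, ∀ i < N, ∑ j ∈ Finset.range N,
        C (lam m i j * (derivative^[j] (ascPochhammer ℂ (m + 1))).eval β) *
        (Q i j).map ((evalRingHom (-(m : ℂ))).comp (evalRingHom (C β))) = 0 := by
      intro β
      have := hn1 (m + 1) (by omega) (fun i => if i < N then ∑ j ∈ Finset.range N,
        C (lam m i j * (derivative^[j] (ascPochhammer ℂ (m + 1))).eval β) *
        (Q i j).map ((evalRingHom (-(m : ℂ))).comp (evalRingHom (C β))) else 0) ?_ ?_
      · intro i hi
        have := this i hi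
        rwa [if_pos hi] at this
      · intro i
        split_ifs with hi
        · refine natDegree_sum_le_of_forall_le _ _ fun j hj => ?_
          refine (natDegree_C_mul_le _ _).trans ((natDegree_map_le).trans ?_)
          exact hD1 i hi j (Finset.mem_range.1 hj)
        · simp
      · apply Polynomial.funext
        intro α
        have h1 := h m (by omega) α β
        rw [eval_zero, eval_finsetSum, ← h1]
        refine Finset.sum_congr rfl fun i hi => ?_
        rw [if_pos (Finset.mem_range.1 hi), eval_mul, eval_finsetSum, Finset.sum_mul]
        refine Finset.sum_congr rfl fun j hj => ?_
        rw [eval_mul, eval_map_ev, eval_C]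
        ring
    intro i hi j hj e
    have := hn2 (m + 1) (by omega) (fun j => if j < N then C (lam m i j) *
      ((Q i j).coeff e).map (evalRingHom (-(m : ℂ))) else 0) ?_ ?_ j hj
    · simp only [if_pos hj, mul_eq_zero, C_eq_zero, hlam m (by omega) i j, false_or] at this
      intro e'
      have h2 := congrArg (fun p => coeff p e') this
      simpa using h2
    · intro j
      split_ifs with hj
      · exact (natDegree_C_mul_le _ _).trans ((natDegree_map_le).trans (hD2 i hi j hj e))
      · simp
    · apply Polynomial.funext
      intro β
      have h1 := congrArg (fun p => coeff p e) (step1 β i hi)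
      simp only [finsetSum_coeff, coeff_C_mul, coeff_map, coeff_zero] at h1
      rw [eval_zero, eval_finsetSum, ← h1]
      refine Finset.sum_congr rfl fun j hj => ?_
      rw [if_pos (Finset.mem_range.1 hj), eval_mul, eval_mul, eval_C, eval_map_ev2]
      simp only [RingHom.comp_apply, coe_evalRingHom]
      ring
  intro i hi j hj
  ext e e' : 2
  rw [coeff_zero, coeff_zero]
  apply eq_zero_of_infinite_isRoot
  have : Set.Infinite (Set.range (fun d : ℕ => -((n1 + n2 + v + d : ℕ) : ℂ))) := by
    apply Set.infinite_range_of_injective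
    intro a b hab
    simp only [neg_inj, Nat.cast_inj] at hab
    omega
  refine this.mono ?_
  rintro _ ⟨d, rfl⟩
  exact main _ (by omega) i hi j hj e e'

end HG15

namespace HG15
open Polynomial Filter Topology

/-- Numerators of the iterated derivatives of `1/p`. -/
noncomputable def Nk (p : ℂ[X]) : ℕ → ℂ[X]
  | 0 => 1
  | k + 1 => derivative (Nk p k) * p - (k + 1 : ℂ[X]) * Nk p k * derivative p

/-- The coefficients of the parameter derivatives of `F`. -/
noncomputable def cf (n i j k : ℕ) (α β γ : ℂ) : ℂ :=
  (derivative^[i] (ascPochhammer ℂ n)).eval α * (derivative^[j] (ascPochhammer ℂ n)).eval β *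
    ((Nk (ascPochhammer ℂ n) k).eval γ / (ascPochhammer ℂ n).eval γ ^ (k + 1)) / n.factorial

lemma Nk_root (p : ℂ[X]) (z : ℂ) (hz : p.eval z = 0) (hd : (derivative p).eval z ≠ 0) (k : ℕ) :
    (Nk p k).eval z ≠ 0 := by
  induction k with
  | zero => simp [Nk]
  | succ k ih =>
    have h3 : ((k : ℂ) + 1) ≠ 0 := by exact_mod_cast Nat.succ_ne_zero k
    simp [Nk, hz, hd, ih, h3]

lemma tendsto_cf (m n : ℕ) (h : m < n) (k : ℕ) : ∃ L : ℂ, L ≠ 0 ∧ ∀ i j α β,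
    Tendsto (fun γ => (γ + m) ^ (k + 1) * cf n i j k α β γ) (𝓝[≠] (-(m : ℂ)))
      (𝓝 (L * (derivative^[i] (ascPochhammer ℂ n)).eval α *
        (derivative^[j] (ascPochhammer ℂ n)).eval β)) := by
  obtain ⟨p, hp, hp'⟩ := asc_factor n m h
  have hN := Nk_root _ _ (asc_root n m h) (asc_deriv_ne n m h) k
  have hf : (n.factorial : ℂ) ≠ 0 := by exact_mod_cast n.factorial_ne_zero
  refine ⟨(Nk (ascPochhammer ℂ n) k).eval (-(m : ℂ)) / p.eval (-(m : ℂ)) ^ (k + 1) / n.factorial,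
    by positivity, fun i j α β => ?_⟩
  have hc : ContinuousAt (fun γ => (Nk (ascPochhammer ℂ n) k).eval γ / p.eval γ ^ (k + 1)
      / n.factorial * (derivative^[i] (ascPochhammer ℂ n)).eval α *
        (derivative^[j] (ascPochhammer ℂ n)).eval β) (-(m : ℂ)) := by
    have h1 : ContinuousAt (fun γ => (Nk (ascPochhammer ℂ n) k).eval γ) (-(m : ℂ)) :=
      (Nk (ascPochhammer ℂ n) k).continuous.continuousAt
    have h2 : ContinuousAt (fun γ => p.eval γ) (-(m : ℂ)) := p.continuous.continuousAt
    exact (((h1.div (h2.pow _) (pow_ne_zero _ hp')).div_const _).mul_const _).mul_const _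
  refine (hc.tendsto.mono_left nhdsWithin_le_nhds).congr' ?_
  have : ∀ᶠ γ in 𝓝[≠] (-(m : ℂ)), γ ≠ -(m : ℂ) := eventually_mem_nhdsWithin
  filter_upwards [this] with γ hγ
  have h0 : γ + m ≠ 0 := fun h0 => hγ (by linear_combination h0)
  unfold cf
  have e : (ascPochhammer ℂ n).eval γ = (γ + m) * p.eval γ := by rw [hp]; simp
  rw [e, mul_pow]
  have h0' : (γ + m) ^ (k + 1) ≠ 0 := pow_ne_zero _ h0
  generalize (γ + (m : ℂ)) ^ (k + 1) = q at *
  have hq : q * q⁻¹ = 1 := mul_inv_cancel₀ h0'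
  rw [mul_comm q, ← div_div, div_eq_mul_inv _ q]
  linear_combination (-((derivative^[i] (ascPochhammer ℂ n)).eval α *
    (derivative^[j] (ascPochhammer ℂ n)).eval β *
    ((Nk (ascPochhammer ℂ n) k).eval γ / p.eval γ ^ (k + 1)) / n.factorial)) * hq

/-- Coefficients of polynomial expressions in power series stay in a subalgebra of functions. -/
lemma coeff_mem {ξ σ : Type*} (A : Subalgebra ℂ (ξ → ℂ)) (fam : ξ → σ → PowerSeries ℂ) (M : ℕ)
    (h : ∀ s, ∀ n ≤ M, (fun x => PowerSeries.coeff n (fam x s)) ∈ A) (P : MvPolynomial σ ℂ) :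
    ∀ n ≤ M, (fun x => PowerSeries.coeff n (MvPolynomial.aeval (fam x) P)) ∈ A := by
  induction P using MvPolynomial.induction_on with
  | C a =>
    intro n hn
    have : (fun x : ξ => PowerSeries.coeff n (MvPolynomial.aeval (fam x) (MvPolynomial.C a))) =
        algebraMap ℂ (ξ → ℂ) (PowerSeries.coeff n (PowerSeries.C a)) := by
      funext x
      simp
    rw [this]
    exact A.algebraMap_mem _
  | add p q hp hq =>
    intro n hn
    have := A.add_mem (hp n hn) (hq n hn)
    convert this using 1
    funext x
    simp
  | mul_X p s hp =>
    intro n hn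
    have : (fun x : ξ => PowerSeries.coeff n
        (MvPolynomial.aeval (fam x) (p * MvPolynomial.X s))) =
        ∑ ab ∈ Finset.HasAntidiagonal.antidiagonal n, (fun x => PowerSeries.coeff ab.1
          (MvPolynomial.aeval (fam x) p)) * (fun x => PowerSeries.coeff ab.2 (fam x s)) := by
      funext x
      simp [PowerSeries.coeff_mul]
    rw [this]
    refine A.sum_mem fun ab hab => ?_
    rw [Finset.HasAntidiagonal.mem_antidiagonal] at hab
    exact A.mul_mem (hp _ (by omega)) (h _ _ (by omega))

/-- functions continuous at a point -/
def contAlg (z : ℂ) : Subalgebra ℂ (ℂ → ℂ) where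
  carrier := {g | ContinuousAt g z}
  mul_mem' := fun ha hb => ContinuousAt.mul ha hb
  add_mem' := fun ha hb => ContinuousAt.add ha hb
  algebraMap_mem' := fun r => (continuousAt_const : ContinuousAt (fun _ : ℂ => r) z)

/-- functions rational in the parameters with denominator a power of `(γ)_v` -/
noncomputable def ratAlg (v : ℕ) : Subalgebra ℂ (ℂ × ℂ × ℂ → ℂ) where
  carrier := {g | ∃ (D : ℕ) (Q : ℂ[X][X][X]), ∀ α β γ, (ascPochhammer ℂ v).eval γ ≠ 0 →
    g (α, β, γ) * (ascPochhammer ℂ v).eval γ ^ D = ev α β γ Q}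
  mul_mem' := by
    rintro a b ⟨D, Q, h⟩ ⟨D', Q', h'⟩
    refine ⟨D + D', Q * Q', fun α β γ hγ => ?_⟩
    rw [map_mul, ← h α β γ hγ, ← h' α β γ hγ, Pi.mul_apply]; ring
  add_mem' := by
    rintro a b ⟨D, Q, h⟩ ⟨D', Q', h'⟩
    refine ⟨D + D', Q * C (C (ascPochhammer ℂ v ^ D')) + Q' * C (C (ascPochhammer ℂ v ^ D)),
      fun α β γ hγ => ?_⟩
    rw [map_add, map_mul, map_mul, ← h α β γ hγ, ← h' α β γ hγ, Pi.add_apply]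
    simp only [ev, RingHom.comp_apply, coe_evalRingHom, eval_C, eval_pow]
    ring
  algebraMap_mem' := by
    intro r
    refine ⟨0, C (C (C r)), fun α β γ _ => ?_⟩
    simp [ev]

lemma asc_dvd (n v : ℕ) (h : n ≤ v) : ascPochhammer ℂ n ∣ ascPochhammer ℂ v := by
  induction v with
  | zero => obtain rfl : n = 0 := by omega
            exact dvd_rfl
  | succ v ih =>
    by_cases hn : n = v + 1
    · rw [hn]
    · rw [ascPochhammer_succ_right]
      exact (ih (by omega)).mul_right _

lemma cf_rat (v n : ℕ) (h : n ≤ v) (i j k : ℕ) :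
    (fun x : ℂ × ℂ × ℂ => cf n i j k x.1 x.2.1 x.2.2) ∈ ratAlg v := by
  obtain ⟨r, hr⟩ := asc_dvd n v h
  refine ⟨k + 1, (derivative^[i] (ascPochhammer ℂ n)).map (C.comp C) *
    C ((derivative^[j] (ascPochhammer ℂ n)).map C) *
    C (C (Nk (ascPochhammer ℂ n) k * r ^ (k + 1) * C (n.factorial : ℂ)⁻¹)), fun α β γ hγ => ?_⟩
  rw [hr, eval_mul] at hγ
  have h1 := left_ne_zero_of_mul hγ
  have ea : ev α β γ ((derivative^[i] (ascPochhammer ℂ n)).map (C.comp C)) =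
      (derivative^[i] (ascPochhammer ℂ n)).eval α := by
    rw [← eval_map_ev, Polynomial.map_map]
    congr 1
    conv_rhs => rw [← Polynomial.map_id (p := derivative^[i] (ascPochhammer ℂ n))]
    congr 1
    ext x; simp
  have eb : ev α β γ (C ((derivative^[j] (ascPochhammer ℂ n)).map C)) =
      (derivative^[j] (ascPochhammer ℂ n)).eval β := by
    simp only [ev, RingHom.comp_apply, coe_evalRingHom, eval_C]
    rw [eval_map_apply]
    simp
  rw [map_mul, map_mul, ea, eb, hr]
  simp only [ev, RingHom.comp_apply, coe_evalRingHom, eval_C, eval_mul, eval_pow, cf, mul_pow]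
  field_simp

lemma asc_eval_ne (v : ℕ) (γ : ℂ) (h : ∀ n < v, γ ≠ -(n : ℂ)) : (ascPochhammer ℂ v).eval γ ≠ 0 := by
  intro h0
  rw [ascPochhammer_eval_eq_zero_iff] at h0
  obtain ⟨k, hk, hk'⟩ := h0
  exact h k hk (by rw [hk', neg_neg])

lemma cf_cont (m n : ℕ) (h : n ≤ m) (i j k : ℕ) (α β : ℂ) :
    ContinuousAt (fun γ => cf n i j k α β γ) (-(m : ℂ)) := by
  have h0 : (ascPochhammer ℂ n).eval (-(m : ℂ)) ≠ 0 := by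
    apply asc_eval_ne
    intro l hl h1
    simp only [neg_inj, Nat.cast_inj] at h1
    omega
  have h1 : ContinuousAt (fun γ => (Nk (ascPochhammer ℂ n) k).eval γ) (-(m : ℂ)) :=
      (Nk (ascPochhammer ℂ n) k).continuous.continuousAt
  have h2 : ContinuousAt (fun γ => (ascPochhammer ℂ n).eval γ) (-(m : ℂ)) :=
    (ascPochhammer ℂ n).continuous.continuousAt
  exact ((continuousAt_const.mul (h1.div (h2.pow _) (pow_ne_zero _ h0)))).div_const _

lemma taylor_dvd {σ S : Type*} [Fintype σ] [CommRing S] [Algebra ℂ S] (d : S) (y h : σ → S)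
    (hh : ∀ s, d ∣ h s) (P : MvPolynomial σ ℂ) :
    d ∣ MvPolynomial.aeval (y + h) P - MvPolynomial.aeval y P ∧
    d ^ 2 ∣ MvPolynomial.aeval (y + h) P - MvPolynomial.aeval y P -
      ∑ s, MvPolynomial.aeval y (MvPolynomial.pderiv s P) * h s := by
  classical
  induction P using MvPolynomial.induction_on with
  | C a => simp
  | add p q hp hq =>
    constructor
    · have := dvd_add hp.1 hq.1
      convert this using 1
      simp only [map_add]; ring
    · have := dvd_add hp.2 hq.2
      convert this using 1
      simp only [map_add, add_mul, Finset.sum_add_distrib]; ring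
  | mul_X p r hp =>
    have e1 : MvPolynomial.aeval (y + h) (p * MvPolynomial.X r) -
        MvPolynomial.aeval y (p * MvPolynomial.X r) =
        (MvPolynomial.aeval (y + h) p - MvPolynomial.aeval y p) * (y r + h r) +
          MvPolynomial.aeval y p * h r := by
      simp only [map_mul, MvPolynomial.aeval_X, Pi.add_apply]; ring
    have e2 : ∑ s, MvPolynomial.aeval y (MvPolynomial.pderiv s (p * MvPolynomial.X r)) * h s =
        (∑ s, MvPolynomial.aeval y (MvPolynomial.pderiv s p) * h s) * y r +
          MvPolynomial.aeval y p * h r := by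
      have : ∀ s, MvPolynomial.aeval y (MvPolynomial.pderiv s (p * MvPolynomial.X r)) * h s =
          MvPolynomial.aeval y (MvPolynomial.pderiv s p) * h s * y r +
          (if r = s then MvPolynomial.aeval y p * h r else 0) := by
        intro s
        rw [MvPolynomial.pderiv_mul]
        by_cases hs : r = s
        · subst hs; simp; ring
        · rw [MvPolynomial.pderiv_X_of_ne hs, if_neg hs]; simp; ring
      simp only [this, Finset.sum_add_distrib, ← Finset.sum_mul, Finset.sum_ite_eq,
        Finset.mem_univ, if_true]
    constructor
    · rw [e1]
      exact dvd_add (hp.1.mul_right _) ((hh r).mul_left _)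
    · rw [e1, e2]
      have : (MvPolynomial.aeval (y + h) p - MvPolynomial.aeval y p) * (y r + h r) +
          MvPolynomial.aeval y p * h r -
          ((∑ s, MvPolynomial.aeval y (MvPolynomial.pderiv s p) * h s) * y r +
          MvPolynomial.aeval y p * h r) =
          (MvPolynomial.aeval (y + h) p - MvPolynomial.aeval y p -
          ∑ s, MvPolynomial.aeval y (MvPolynomial.pderiv s p) * h s) * y r +
          (MvPolynomial.aeval (y + h) p - MvPolynomial.aeval y p) * h r := by ring
      rw [this]
      refine dvd_add (hp.2.mul_right _) ?_
      rw [pow_two]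
      exact mul_dvd_mul hp.1 (hh r)

end HG15

namespace HG15
open Polynomial Filter Topology

/-- The family of power series in `x` substituted into the polynomial. -/
noncomputable def fam (N : ℕ) (α β γ : ℂ) :
    Fin 4 ⊕ (Fin N × Fin N × Fin N) → PowerSeries ℂ :=
  Sum.elim ![PowerSeries.X, PowerSeries.C α, PowerSeries.C β, PowerSeries.C γ]
    (fun s => PowerSeries.mk fun n => cf n s.1 s.2.1 s.2.2 α β γ)

/-- The truncated family. -/
noncomputable def famT (N m : ℕ) (α β γ : ℂ) :
    Fin 4 ⊕ (Fin N × Fin N × Fin N) → PowerSeries ℂ :=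
  Sum.elim ![PowerSeries.X, PowerSeries.C α, PowerSeries.C β, PowerSeries.C γ]
    (fun s => PowerSeries.mk fun n => if n ≤ m then cf n s.1 s.2.1 s.2.2 α β γ else 0)

/-- the tail -/
noncomputable def tailS (m i j k : ℕ) (α β γ : ℂ) : PowerSeries ℂ :=
  PowerSeries.mk fun b => cf (m + 1 + b) i j k α β γ

/-- The tail family. -/
noncomputable def famH (N m : ℕ) (α β γ : ℂ) :
    Fin 4 ⊕ (Fin N × Fin N × Fin N) → PowerSeries ℂ :=
  Sum.elim (fun _ => 0)
    (fun s => PowerSeries.X ^ (m + 1) * tailS m s.1 s.2.1 s.2.2 α β γ)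

lemma fam_eq (N m : ℕ) (α β γ : ℂ) : fam N α β γ = famT N m α β γ + famH N m α β γ := by
  funext s
  rcases s with s | s
  · simp [fam, famT, famH]
  · ext n
    simp only [fam, famT, famH, Sum.elim_inr, Pi.add_apply, map_add, PowerSeries.coeff_mk,
      PowerSeries.coeff_X_pow_mul', tailS]
    by_cases h : n ≤ m
    · rw [if_pos h, if_neg (by omega), add_zero]
    · rw [if_neg h, if_pos (by omega), zero_add]
      congr 1; omega

lemma base_coeff_cont (α β z : ℂ) (s : Fin 4) (n : ℕ) :
    ContinuousAt (fun γ => PowerSeries.coeff n ((![PowerSeries.X, PowerSeries.C α, PowerSeries.C β,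
      PowerSeries.C γ] : Fin 4 → PowerSeries ℂ) s)) z := by
  fin_cases s
  · simpa using continuousAt_const
  · simpa using continuousAt_const
  · simpa using continuousAt_const
  · change ContinuousAt (fun γ => PowerSeries.coeff n (PowerSeries.C γ)) z
    simp only [PowerSeries.coeff_C]
    by_cases h : n = 0
    · simp only [h, if_true]
      exact continuousAt_id
    · simp only [h, if_false]
      exact continuousAt_const

lemma famT_cont (N m : ℕ) (α β : ℂ) (P : MvPolynomial (Fin 4 ⊕ (Fin N × Fin N × Fin N)) ℂ)
    (n : ℕ) : ContinuousAt (fun γ => PowerSeries.coeff n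
      (MvPolynomial.aeval (famT N m α β γ) P)) (-(m : ℂ)) := by
  refine coeff_mem (contAlg (-(m : ℂ))) (fun γ => famT N m α β γ) n ?_ P n le_rfl
  intro s a _
  rcases s with s | s
  · exact base_coeff_cont α β _ s a
  · change ContinuousAt (fun γ : ℂ => PowerSeries.coeff a (famT N m α β γ (Sum.inr s))) (-(m : ℂ))
    simp only [famT, Sum.elim_inr, PowerSeries.coeff_mk]
    by_cases h : a ≤ m
    · simp only [if_pos h]; exact cf_cont m a h _ _ _ α β
    · simp only [if_neg h]; exact continuousAt_const

lemma fam_cont (N m : ℕ) (α β : ℂ) (P : MvPolynomial (Fin 4 ⊕ (Fin N × Fin N × Fin N)) ℂ)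
    (n : ℕ) (hn : n ≤ m) : ContinuousAt (fun γ => PowerSeries.coeff n
      (MvPolynomial.aeval (fam N α β γ) P)) (-(m : ℂ)) := by
  refine coeff_mem (contAlg (-(m : ℂ))) (fun γ => fam N α β γ) m ?_ P n hn
  intro s a ha
  rcases s with s | s
  · exact base_coeff_cont α β _ s a
  · change ContinuousAt (fun γ : ℂ => PowerSeries.coeff a (fam N α β γ (Sum.inr s))) (-(m : ℂ))
    simp only [fam, Sum.elim_inr, PowerSeries.coeff_mk]
    exact cf_cont m a ha _ _ _ α β

lemma fam_rat (N v : ℕ) (P : MvPolynomial (Fin 4 ⊕ (Fin N × Fin N × Fin N)) ℂ) :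
    (fun x : ℂ × ℂ × ℂ => PowerSeries.coeff v
      (MvPolynomial.aeval (fam N x.1 x.2.1 x.2.2) P)) ∈ ratAlg v := by
  refine coeff_mem (ratAlg v) (fun x : ℂ × ℂ × ℂ => fam N x.1 x.2.1 x.2.2) v ?_ P v le_rfl
  intro s a ha
  rcases s with s | s
  · fin_cases s
    · exact (ratAlg v).algebraMap_mem (PowerSeries.coeff a (PowerSeries.X : PowerSeries ℂ))
    · refine ⟨0, if a = 0 then X else 0, fun α β γ _ => ?_⟩
      by_cases h : a = 0 <;> simp [fam, PowerSeries.coeff_C, h, ev]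
    · refine ⟨0, if a = 0 then C X else 0, fun α β γ _ => ?_⟩
      by_cases h : a = 0 <;> simp [fam, PowerSeries.coeff_C, h, ev]
    · refine ⟨0, if a = 0 then C (C X) else 0, fun α β γ _ => ?_⟩
      by_cases h : a = 0 <;> simp [fam, PowerSeries.coeff_C, h, ev]
  · have := cf_rat v a ha s.1 s.2.1 s.2.2
    convert this using 1
    funext x
    simp [fam]

/-- Allowed values of `γ`. -/
def U : Set ℂ := {γ | ∀ n : ℕ, γ ≠ -(n : ℂ)}

lemma eventually_U (m : ℕ) : ∀ᶠ γ in 𝓝[≠] (-(m : ℂ)), γ ∈ U := by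
  have h1 : ∀ᶠ γ in 𝓝[≠] (-(m : ℂ)), γ ≠ -(m : ℂ) := eventually_mem_nhdsWithin
  have h2 : ∀ᶠ γ in 𝓝[≠] (-(m : ℂ)), γ ∈ Metric.ball (-(m : ℂ)) 1 :=
    nhdsWithin_le_nhds (Metric.ball_mem_nhds _ one_pos)
  filter_upwards [h1, h2] with γ h1 h2 n hn
  apply h1
  rw [hn] at h2 ⊢
  rw [Metric.mem_ball, dist_eq_norm] at h2
  have e : -(n : ℂ) - -(m : ℂ) = (((m : ℤ) - n : ℤ) : ℂ) := by push_cast; ring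
  rw [e, Complex.norm_intCast] at h2
  have : |(m : ℤ) - n| < 1 := by exact_mod_cast h2
  rw [Int.abs_lt_one_iff] at this
  have : n = m := by omega
  rw [this]

/-- The coefficient extraction. -/
lemma coeff_expand (N m v : ℕ) (hv : v ≤ m) (α β γ : ℂ)
    (P : MvPolynomial (Fin 4 ⊕ (Fin N × Fin N × Fin N)) ℂ) :
    PowerSeries.coeff (m + 1 + v) (MvPolynomial.aeval (fam N α β γ) P) =
    PowerSeries.coeff (m + 1 + v) (MvPolynomial.aeval (famT N m α β γ) P) +
    ∑ s : Fin N × Fin N × Fin N, ∑ ab ∈ Finset.HasAntidiagonal.antidiagonal v,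
      PowerSeries.coeff ab.1 (MvPolynomial.aeval (fam N α β γ)
        (MvPolynomial.pderiv (Sum.inr s) P)) * cf (m + 1 + ab.2) s.1 s.2.1 s.2.2 α β γ := by
  have hd : ∀ s, (PowerSeries.X ^ (m + 1) : PowerSeries ℂ) ∣ famH N m α β γ s := by
    intro s
    rcases s with s | s
    · simp [famH]
    · exact Dvd.intro _ rfl
  have h2 := (taylor_dvd _ (famT N m α β γ) _ hd P).2
  rw [← fam_eq, ← pow_mul, PowerSeries.X_pow_dvd_iff] at h2
  have h3 := h2 (m + 1 + v) (by omega)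
  rw [map_sub, map_sub, sub_sub, sub_eq_zero] at h3
  rw [h3, Fintype.sum_sum_type]
  congr 1
  simp only [famH, Sum.elim_inl, Sum.elim_inr, mul_zero, Finset.sum_const_zero, zero_add, map_sum]
  refine Finset.sum_congr rfl fun s _ => ?_
  rw [mul_left_comm, PowerSeries.coeff_X_pow_mul', if_pos (by omega), Nat.add_sub_cancel_left,
    PowerSeries.coeff_mul]
  refine Finset.sum_congr rfl fun ab hab => ?_
  rw [Finset.HasAntidiagonal.mem_antidiagonal] at hab
  have h4 := (taylor_dvd _ (famT N m α β γ) _ hd (MvPolynomial.pderiv (Sum.inr s) P)).1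
  rw [← fam_eq, PowerSeries.X_pow_dvd_iff] at h4
  have h5 := h4 ab.1 (by omega)
  rw [map_sub, sub_eq_zero] at h5
  rw [h5]
  simp [tailS]

lemma main_prop (N : ℕ) (P : MvPolynomial (Fin 4 ⊕ (Fin N × Fin N × Fin N)) ℂ)
    (hP : ∀ α β, ∀ γ ∈ U, MvPolynomial.aeval (fam N α β γ) P = 0) (s : Fin N × Fin N × Fin N) :
    ∀ α β, ∀ γ ∈ U, MvPolynomial.aeval (fam N α β γ) (MvPolynomial.pderiv (Sum.inr s) P) = 0 := by
  classical
  by_contra hcon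
  -- coefficient functions
  let g : Fin N × Fin N × Fin N → ℕ → ℂ → ℂ → ℂ → ℂ := fun s a α β γ =>
    PowerSeries.coeff a (MvPolynomial.aeval (fam N α β γ) (MvPolynomial.pderiv (Sum.inr s) P))
  let bad : Fin N → Prop := fun k => ∃ i j a α β, ∃ γ ∈ U, g (i, j, k) a α β γ ≠ 0
  have hbad : ∃ k, bad k := by
    push Not at hcon
    obtain ⟨α, β, γ, hγ, h0⟩ := hcon
    refine ⟨s.2.2, s.1, s.2.1, ?_⟩
    by_contra h1
    push Not at h1
    exact h0 (PowerSeries.ext fun a => by simpa using h1 a α β γ hγ)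
  obtain ⟨k, hk, hkmax⟩ : ∃ k, bad k ∧ ∀ k', k < k' → ¬ bad k' := by
    have hne : (Finset.univ.filter bad).Nonempty := by
      obtain ⟨k, hk⟩ := hbad
      exact ⟨k, by simpa using hk⟩
    refine ⟨(Finset.univ.filter bad).max' hne, ?_, ?_⟩
    · have := Finset.max'_mem _ hne
      simpa using this
    · intro k' hk' hb
      have := Finset.le_max' (Finset.univ.filter bad) k' (by simpa using hb)
      exact absurd hk' (not_lt.2 this)
  let badv : ℕ → Prop := fun a => ∃ i j α β, ∃ γ ∈ U, g (i, j, k) a α β γ ≠ 0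
  have hbv : ∃ a, badv a := by
    obtain ⟨i, j, a, h⟩ := hk
    exact ⟨a, i, j, h⟩
  obtain ⟨v, hv, hvmin⟩ : ∃ v, badv v ∧ ∀ a < v, ¬ badv a :=
    ⟨Nat.find hbv, Nat.find_spec hbv, fun a ha => Nat.find_min hbv ha⟩
  -- rationality
  have hrat : ∀ i j : Fin N, ∃ (D : ℕ) (Q : ℂ[X][X][X]), ∀ α β γ,
      (ascPochhammer ℂ v).eval γ ≠ 0 →
      g (i, j, k) v α β γ * (ascPochhammer ℂ v).eval γ ^ D = ev α β γ Q :=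
    fun i j => fam_rat N v (MvPolynomial.pderiv (Sum.inr (i, j, k)) P)
  choose D Q hQ using hrat
  choose L hL0 hL using fun (k m n : ℕ) (h : m < n) => tendsto_cf m n h k
  -- the limit relation
  have hlim : ∀ m, v ≤ m → ∀ α β : ℂ, ∑ i : Fin N, ∑ j : Fin N,
      g (i, j, k) v α β (-(m : ℂ)) * (L k m (m + 1) (by omega) *
        (derivative^[(i : ℕ)] (ascPochhammer ℂ (m + 1))).eval α *
        (derivative^[(j : ℕ)] (ascPochhammer ℂ (m + 1))).eval β) = 0 := by
    intro m hm α β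
    have hU := eventually_U m
    have hpow0 : ∀ d : ℕ, 0 < d → Tendsto (fun γ : ℂ => (γ + m) ^ d) (𝓝[≠] (-(m : ℂ))) (𝓝 0) := by
      intro d hd
      have : ContinuousAt (fun γ : ℂ => (γ + m) ^ d) (-(m : ℂ)) := by fun_prop
      have h := this.tendsto.mono_left (nhdsWithin_le_nhds (s := {-(m : ℂ)}ᶜ))
      simpa [hd.ne'] using h
    have hg : ∀ s a, a ≤ m → Tendsto (fun γ => g s a α β γ) (𝓝[≠] (-(m : ℂ)))
        (𝓝 (g s a α β (-(m : ℂ)))) := fun s a ha =>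
      (fam_cont N m α β _ a ha).tendsto.mono_left nhdsWithin_le_nhds
    have hterm : ∀ (s : Fin N × Fin N × Fin N) (ab : ℕ × ℕ),
        ab ∈ Finset.HasAntidiagonal.antidiagonal v →
        Tendsto (fun γ => (γ + m) ^ ((k : ℕ) + 1) *
          (g s ab.1 α β γ * cf (m + 1 + ab.2) s.1 s.2.1 s.2.2 α β γ)) (𝓝[≠] (-(m : ℂ)))
          (𝓝 (if s.2.2 = k ∧ ab.1 = v then g s v α β (-(m : ℂ)) *
            (L k m (m + 1 + ab.2) (by omega) *
            (derivative^[(s.1 : ℕ)] (ascPochhammer ℂ (m + 1 + ab.2))).eval α *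
            (derivative^[(s.2.1 : ℕ)] (ascPochhammer ℂ (m + 1 + ab.2))).eval β) else 0)) := by
      rintro ⟨i, j, k'⟩ ⟨a, b⟩ hab
      rw [Finset.HasAntidiagonal.mem_antidiagonal] at hab
      dsimp only at hab ⊢
      have hl := hL k' m (m + 1 + b) (by omega) i j α β
      rcases lt_trichotomy k' k with hlt | heq | hgt
      · rw [if_neg (by rintro ⟨h, _⟩; exact hlt.ne h)]
        have hlt' : (k' : ℕ) < k := hlt
        have := ((hpow0 (k - k') (by omega)).mul (hg (i, j, k') a (by omega))).mul hl
        rw [zero_mul, zero_mul] at this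
        refine this.congr fun γ => ?_
        have e : (k : ℕ) + 1 = (k - k') + (k' + 1) := by omega
        rw [e, pow_add]; ring
      · subst heq
        by_cases ha : a = v
        · subst ha
          rw [if_pos ⟨rfl, rfl⟩]
          refine ((hg (i, j, k') a (by omega)).mul hl).congr fun γ => ?_
          ring
        · rw [if_neg (by rintro ⟨_, h⟩; exact ha h)]
          refine tendsto_const_nhds.congr' ?_
          filter_upwards [hU] with γ hγ
          have : g (i, j, k') a α β γ = 0 := by
            by_contra h0
            exact hvmin a (by omega) ⟨i, j, α, β, γ, hγ, h0⟩
          rw [this]; ring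
      · rw [if_neg (by rintro ⟨h, _⟩; exact hgt.ne' h)]
        refine tendsto_const_nhds.congr' ?_
        filter_upwards [hU] with γ hγ
        have : g (i, j, k') a α β γ = 0 := by
          by_contra h0
          exact hkmax k' hgt ⟨i, j, a, α, β, γ, hγ, h0⟩
        rw [this]; ring
    have hT : Tendsto (fun γ => (γ + m) ^ ((k : ℕ) + 1) * PowerSeries.coeff (m + 1 + v)
        (MvPolynomial.aeval (famT N m α β γ) P)) (𝓝[≠] (-(m : ℂ))) (𝓝 0) := by
      have := (hpow0 ((k : ℕ) + 1) (by omega)).mul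
        ((famT_cont N m α β P (m + 1 + v)).tendsto.mono_left nhdsWithin_le_nhds)
      rwa [zero_mul] at this
    have hall := hT.add (tendsto_finsetSum Finset.univ fun s _ =>
      tendsto_finsetSum (Finset.HasAntidiagonal.antidiagonal v) fun ab hab => hterm s ab hab)
    have hz : Tendsto (fun _ : ℂ => (0 : ℂ)) (𝓝[≠] (-(m : ℂ))) (𝓝 0) := tendsto_const_nhds
    have huniq := tendsto_nhds_unique (hall.congr' (f₂ := fun _ => 0) (by
      filter_upwards [hU] with γ hγ
      have h1 := coeff_expand N m v hm α β γ P
      rw [hP α β γ hγ, map_zero] at h1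
      simp only [← Finset.mul_sum]
      rw [← mul_add]
      change (γ + m) ^ ((k : ℕ) + 1) * _ = 0
      rw [← h1, mul_zero])) hz
    rw [zero_add] at huniq
    rw [← huniq, Fintype.sum_prod_type]
    refine Finset.sum_congr rfl fun i _ => ?_
    rw [Fintype.sum_prod_type]
    refine Finset.sum_congr rfl fun j _ => ?_
    rw [Finset.sum_eq_single k]
    · rw [Finset.sum_eq_single (v, 0)]
      · simp
      · rintro ⟨a, b⟩ hab hne
        rw [Finset.HasAntidiagonal.mem_antidiagonal] at hab
        dsimp only at hab
        rw [if_neg]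
        rintro ⟨_, h⟩
        dsimp only at h
        apply hne
        ext <;> simp <;> omega
      · intro h
        exact absurd (by simp) h
    · intro k' _ hne
      refine Finset.sum_eq_zero fun ab _ => ?_
      rw [if_neg]
      rintro ⟨h, _⟩
      exact hne h
    · simp
  -- conclusion
  have hasc : ∀ m, v ≤ m → (ascPochhammer ℂ v).eval (-(m : ℂ)) ≠ 0 := by
    intro m hm
    apply asc_eval_ne
    intro l hl h1
    simp only [neg_inj, Nat.cast_inj] at h1
    omega
  have hzero := indep_two N v
    (fun i j => if h : i < N ∧ j < N then Q ⟨i, h.1⟩ ⟨j, h.2⟩ else 0)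
    (fun m i j => L k m (m + 1) (by omega) *
      (if h : i < N ∧ j < N then
        ((ascPochhammer ℂ v).eval (-(m : ℂ)) ^ D ⟨i, h.1⟩ ⟨j, h.2⟩)⁻¹ else 1))
    (by
      intro m hm i j
      refine mul_ne_zero (hL0 _ _ _ _) ?_
      split_ifs with h
      · exact inv_ne_zero (pow_ne_zero _ (hasc m hm))
      · exact one_ne_zero)
    (by
      intro m hm α β
      rw [← hlim m hm α β, Finset.sum_range]
      refine Finset.sum_congr rfl fun i _ => ?_
      rw [Finset.sum_range]
      refine Finset.sum_congr rfl fun j _ => ?_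
      have h : (i : ℕ) < N ∧ (j : ℕ) < N := ⟨i.2, j.2⟩
      rw [dif_pos h, dif_pos h]
      have e := hQ i j α β (-(m : ℂ)) (hasc m hm)
      simp only [Fin.eta]
      rw [← e]
      have hq : (ascPochhammer ℂ v).eval (-(m : ℂ)) ^ D i j ≠ 0 := pow_ne_zero _ (hasc m hm)
      field_simp)
  obtain ⟨i, j, α, β, γ, hγ, h0⟩ := hv
  have h1 := hzero i i.2 j j.2
  rw [dif_pos ⟨i.2, j.2⟩] at h1
  have hne : (ascPochhammer ℂ v).eval γ ≠ 0 := asc_eval_ne v γ fun n _ => hγ n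
  have h2 := hQ i j α β γ hne
  simp only [Fin.eta] at h1
  rw [h1, map_zero] at h2
  exact mul_ne_zero h0 (pow_ne_zero _ hne) h2

end HG15

namespace HG15
open Polynomial Filter Topology Metric

/-- The domain. -/
def Om : Set (Fin 4 → ℂ) := {p | ‖p 0‖ < 1 ∧ ∀ n : ℕ, p 3 ≠ -(n : ℂ)}

lemma isOpen_U : IsOpen U := by
  have h1 : Topology.IsClosedEmbedding (fun n : ℕ => -((n : ℝ) : ℂ)) :=
    (Homeomorph.neg ℂ).isClosedEmbedding.comp
      (Complex.isometry_ofReal.isClosedEmbedding.comp Nat.isClosedEmbedding_coe_real)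
  have h2 : U = (Set.range (fun n : ℕ => -((n : ℝ) : ℂ)))ᶜ := by
    ext γ
    simp only [U, Set.mem_ofPred_eq, Set.mem_compl_iff, Set.mem_range, not_exists]
    refine forall_congr' fun n => ?_
    rw [ne_comm]
    simp
  rw [h2]
  exact h1.isClosed_range.isOpen_compl

lemma isOpen_Om : IsOpen Om := by
  have h1 : IsOpen {p : Fin 4 → ℂ | ‖p 0‖ < 1} :=
    isOpen_lt (by fun_prop) continuous_const
  have h2 : IsOpen {p : Fin 4 → ℂ | p 3 ∈ U} :=
    isOpen_U.preimage (continuous_apply 3)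
  exact h1.inter h2

/-- locally uniformly summable at a point -/
def LUS (g : ℕ → (Fin 4 → ℂ) → ℂ) : Prop :=
  ∀ p ∈ Om, ∃ u : ℕ → ℝ, Summable u ∧ ∀ᶠ q in 𝓝 p, ∀ n, ‖g n q‖ ≤ u n

lemma LUS.summable {g : ℕ → (Fin 4 → ℂ) → ℂ} (h : LUS g) {p : Fin 4 → ℂ} (hp : p ∈ Om) :
    Summable fun n => ‖g n p‖ := by
  obtain ⟨u, hu, h1⟩ := h p hp
  exact Summable.of_nonneg_of_le (fun n => norm_nonneg _) h1.self_of_nhds hu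

/-- local uniform bounds on the derivatives -/
lemma LUS.fderiv_bound {g : ℕ → (Fin 4 → ℂ) → ℂ} (h : LUS g)
    (hd : ∀ n, ∀ p ∈ Om, DifferentiableAt ℂ (g n) p) {p : Fin 4 → ℂ} (hp : p ∈ Om) :
    ∃ ε > 0, ball p ε ⊆ Om ∧ ∃ u : ℕ → ℝ, Summable u ∧ ∀ n, ∀ q ∈ ball p ε,
      ‖fderiv ℂ (g n) q‖ ≤ u n := by
  obtain ⟨u, hu, h1⟩ := h p hp
  obtain ⟨ε, hε, hb⟩ := Metric.eventually_nhds_iff_ball.1 (h1.and (isOpen_Om.mem_nhds hp))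
  refine ⟨ε / 2, by positivity, fun q hq => (hb q (ball_subset_ball (by linarith) hq)).2,
    fun n => 2 * u n / (ε / 2), (hu.mul_left 2).div_const _, fun n q hq => ?_⟩
  have hsub : ball q (ε / 2) ⊆ ball p ε := by
    apply ball_subset_ball'
    rw [mem_ball] at hq
    linarith
  refine Complex.norm_fderiv_le_div_of_mapsTo_ball (R₁ := ε / 2) (R₂ := 2 * u n) ?_ ?_ (by positivity)
  · intro z hz
    exact (hd n z (hb z (hsub hz)).2).differentiableWithinAt
  · intro z hz
    rw [mem_closedBall, dist_eq_norm]
    have a1 := (hb z (hsub hz)).1 n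
    have a2 := (hb q (hsub (mem_ball_self (by positivity)))).1 n
    calc _ ≤ ‖g n z‖ + ‖g n q‖ := norm_sub_le _ _
      _ ≤ _ := by linarith

lemma single_norm (i : Fin 4) : ‖(Pi.single i 1 : Fin 4 → ℂ)‖ = 1 := by
  rw [Pi.norm_single, norm_one]

lemma pd_step {g h : ℕ → (Fin 4 → ℂ) → ℂ} {f : (Fin 4 → ℂ) → ℂ} (i : Fin 4) (hg : LUS g)
    (hd : ∀ n, ∀ p ∈ Om, DifferentiableAt ℂ (g n) p)
    (hh : ∀ n, ∀ p ∈ Om, pd15 i (g n) p = h n p)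
    (hf : ∀ p ∈ Om, f p = ∑' n, g n p) :
    LUS h ∧ ∀ p ∈ Om, pd15 i f p = ∑' n, h n p := by
  constructor
  · intro p hp
    obtain ⟨ε, hε, hb, u, hu, hbd⟩ := hg.fderiv_bound hd hp
    refine ⟨u, hu, ?_⟩
    filter_upwards [ball_mem_nhds p hε] with q hq n
    rw [← hh n q (hb hq), pd15]
    calc _ ≤ ‖fderiv ℂ (g n) q‖ * ‖(Pi.single i 1 : Fin 4 → ℂ)‖ := ContinuousLinearMap.le_opNorm _ _
      _ ≤ u n := by rw [single_norm, mul_one]; exact hbd n q hq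
  · intro p hp
    obtain ⟨ε, hε, hb, u, hu, hbd⟩ := hg.fderiv_bound hd hp
    have key := hasFDerivAt_tsum_of_isPreconnected (f := g) (f' := fun n => fderiv ℂ (g n)) hu
      isOpen_ball ((convex_ball p ε).isPreconnected)
      (fun n x hx => (hd n x (hb hx)).hasFDerivAt) hbd (mem_ball_self hε)
      (hg.summable hp).of_norm (mem_ball_self hε)
    have e : f =ᶠ[𝓝 p] fun y => ∑' n, g n y := by
      filter_upwards [isOpen_Om.mem_nhds hp] with q hq using hf q hq
    rw [pd15, e.fderiv_eq, key.fderiv]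
    have hs : Summable fun n => fderiv ℂ (g n) p :=
      Summable.of_norm_bounded hu fun n => hbd n p (mem_ball_self hε)
    have := (ContinuousLinearMap.apply ℂ ℂ (Pi.single i 1 : Fin 4 → ℂ)).map_tsum hs
    simp only [ContinuousLinearMap.apply_apply] at this
    rw [this]
    exact tsum_congr fun n => hh n p hp

/-- The terms of the series. -/
noncomputable def term (i j k n : ℕ) (p : Fin 4 → ℂ) : ℂ :=
  cf n i j k (p 1) (p 2) (p 3) * p 0 ^ n

lemma asc_ne {γ : ℂ} (h : γ ∈ U) (n : ℕ) : (ascPochhammer ℂ n).eval γ ≠ 0 :=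
  asc_eval_ne n γ fun m _ => h m

lemma diff_poly (q : ℂ[X]) (i : Fin 4) (p : Fin 4 → ℂ) :
    DifferentiableAt ℂ (fun p : Fin 4 → ℂ => q.eval (p i)) p := by
  have h1 : DifferentiableAt ℂ (fun x => q.eval x) (p i) := q.differentiable.differentiableAt
  exact h1.comp p (by fun_prop : DifferentiableAt ℂ (fun p : Fin 4 → ℂ => p i) p)

lemma term_diff (i j k n : ℕ) (p : Fin 4 → ℂ) (hp : p ∈ Om) :
    DifferentiableAt ℂ (term i j k n) p := by
  have h3 := asc_ne hp.2 n
  unfold term cf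
  simp only [div_eq_mul_inv]
  exact ((((diff_poly _ 1 p).mul (diff_poly _ 2 p)).mul
    ((diff_poly _ 3 p).mul (((diff_poly _ 3 p).pow _).fun_inv (pow_ne_zero _ h3)))).mul_const _).mul
    ((by fun_prop : DifferentiableAt ℂ (fun p : Fin 4 → ℂ => p 0 ^ n) p))

lemma pd_eq (i : Fin 4) (f : (Fin 4 → ℂ) → ℂ) (p : Fin 4 → ℂ) (hf : DifferentiableAt ℂ f p) (d : ℂ)
    (h : HasDerivAt (fun t => f (Function.update p i t)) d (p i)) : pd15 i f p = d := by
  have h1 := hasDerivAt_update p i (p i)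
  have hf' : HasFDerivAt f (fderiv ℂ f p) (Function.update p i (p i)) := by
    rw [Function.update_eq_self]; exact hf.hasFDerivAt
  exact (hf'.comp_hasDerivAt _ h1).unique h

lemma quot_deriv (p : ℂ[X]) (k : ℕ) (γ : ℂ) (h : p.eval γ ≠ 0) :
    HasDerivAt (fun t => (Nk p k).eval t / p.eval t ^ (k + 1))
      ((Nk p (k + 1)).eval γ / p.eval γ ^ (k + 1 + 1)) γ := by
  have h1 := (Nk p k).hasDerivAt γ
  have h2 := (p.hasDerivAt γ).fun_pow (k + 1)
  have h3 := h1.fun_div h2 (pow_ne_zero _ h)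
  refine h3.congr_deriv ?_
  have e : (Nk p (k + 1)).eval γ = (derivative (Nk p k)).eval γ * p.eval γ -
      (k + 1) * (Nk p k).eval γ * (derivative p).eval γ := by
    simp [Nk]
  rw [e]
  generalize (derivative (Nk p k)).eval γ = a
  generalize (derivative p).eval γ = b
  generalize (Nk p k).eval γ = c
  generalize p.eval γ = d at *
  rw [div_eq_div_iff (pow_ne_zero _ (pow_ne_zero _ h)) (pow_ne_zero _ h)]
  push_cast
  ring

lemma cf_deriv3 (n i j k : ℕ) (α β γ : ℂ) (h : γ ∈ U) :
    HasDerivAt (fun t => cf n i j k α β t) (cf n i j (k + 1) α β γ) γ :=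
  ((quot_deriv (ascPochhammer ℂ n) k γ (asc_ne h n)).const_mul
    ((derivative^[i] (ascPochhammer ℂ n)).eval α *
      (derivative^[j] (ascPochhammer ℂ n)).eval β)).div_const (n.factorial : ℂ)

lemma pd1_term (i j k n : ℕ) (p : Fin 4 → ℂ) (hp : p ∈ Om) :
    pd15 1 (term i j k n) p = term (i + 1) j k n p := by
  refine pd_eq _ _ _ (term_diff _ _ _ _ _ hp) _ ?_
  have h := ((((derivative^[i] (ascPochhammer ℂ n)).hasDerivAt (p 1)).mul_const
    ((derivative^[j] (ascPochhammer ℂ n)).eval (p 2))).mul_const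
    ((Nk (ascPochhammer ℂ n) k).eval (p 3) / (ascPochhammer ℂ n).eval (p 3) ^ (k + 1))).div_const
    (n.factorial : ℂ) |>.mul_const (p 0 ^ n)
  rw [← Function.iterate_succ_apply' derivative] at h
  simpa [term, cf] using h

lemma pd2_term (i j k n : ℕ) (p : Fin 4 → ℂ) (hp : p ∈ Om) :
    pd15 2 (term i j k n) p = term i (j + 1) k n p := by
  refine pd_eq _ _ _ (term_diff _ _ _ _ _ hp) _ ?_
  have h := ((((derivative^[j] (ascPochhammer ℂ n)).hasDerivAt (p 2)).const_mul
    ((derivative^[i] (ascPochhammer ℂ n)).eval (p 1))).mul_const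
    ((Nk (ascPochhammer ℂ n) k).eval (p 3) / (ascPochhammer ℂ n).eval (p 3) ^ (k + 1))).div_const
    (n.factorial : ℂ) |>.mul_const (p 0 ^ n)
  rw [← Function.iterate_succ_apply' derivative] at h
  simpa [term, cf] using h

lemma pd3_term (i j k n : ℕ) (p : Fin 4 → ℂ) (hp : p ∈ Om) :
    pd15 3 (term i j k n) p = term i j (k + 1) n p := by
  refine pd_eq _ _ _ (term_diff _ _ _ _ _ hp) _ ?_
  have h := (cf_deriv3 n i j k (p 1) (p 2) (p 3) hp.2).mul_const (p 0 ^ n)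
  simpa [term] using h

lemma term_succ (n : ℕ) (p : Fin 4 → ℂ) (hp : p ∈ Om) :
    term 0 0 0 (n + 1) p = term 0 0 0 n p *
      ((p 1 + n) * (p 2 + n) / ((p 3 + n) * (n + 1)) * p 0) := by
  have h1 : p 3 + n ≠ 0 := fun h => hp.2 n (by linear_combination h)
  have h2 := asc_ne hp.2 n
  have h3 : ((n : ℂ) + 1) ≠ 0 := by exact_mod_cast n.succ_ne_zero
  have h4 : (n.factorial : ℂ) ≠ 0 := by exact_mod_cast n.factorial_ne_zero
  simp only [term, cf, Nk, Function.iterate_zero, id, ascPochhammer_succ_eval, eval_one, zero_add,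
    Nat.factorial_succ, Nat.cast_mul, Nat.cast_add, Nat.cast_one, pow_succ, pow_zero,
    one_mul]
  field_simp

lemma ratio_tendsto (K : ℝ) : Tendsto (fun n : ℕ => ((n : ℝ) + K) ^ 2 / (((n : ℝ) - K) * (n + 1)))
    atTop (𝓝 1) := by
  have h0 : Tendsto (fun n : ℕ => ((n : ℝ))⁻¹) atTop (𝓝 0) := tendsto_inv_atTop_nhds_zero_nat
  have h1 : Tendsto (fun n : ℕ => (1 + K * ((n : ℝ))⁻¹) ^ 2 /
      ((1 - K * (n : ℝ)⁻¹) * (1 + (n : ℝ)⁻¹))) atTop (𝓝 ((1 + K * 0) ^ 2 /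
      ((1 - K * 0) * (1 + 0)))) := by
    refine Tendsto.div ((tendsto_const_nhds.add (h0.const_mul K)).pow 2)
      ((tendsto_const_nhds.sub (h0.const_mul K)).mul (tendsto_const_nhds.add h0)) (by norm_num)
  have e : ((1 + K * 0) ^ 2 / ((1 - K * 0) * (1 + 0))) = 1 := by norm_num
  rw [e] at h1
  refine h1.congr' ?_
  filter_upwards [eventually_gt_atTop 0] with n hn
  have hn' : (n : ℝ) ≠ 0 := by positivity
  have e1 : (n : ℝ) + K = n * (1 + K * (n : ℝ)⁻¹) := by field_simp
  have e2 : (n : ℝ) - K = n * (1 - K * (n : ℝ)⁻¹) := by field_simp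
  have e3 : (n : ℝ) + 1 = n * (1 + (n : ℝ)⁻¹) := by field_simp
  rw [e1, e2, e3]
  rw [show (n * (1 + K * (n : ℝ)⁻¹)) ^ 2 = (n : ℝ) ^ 2 * (1 + K * (n : ℝ)⁻¹) ^ 2 by ring,
    show (n * (1 - K * (n : ℝ)⁻¹)) * (n * (1 + (n : ℝ)⁻¹)) =
      (n : ℝ) ^ 2 * ((1 - K * (n : ℝ)⁻¹) * (1 + (n : ℝ)⁻¹)) by ring,
    mul_div_mul_left _ _ (pow_ne_zero 2 hn')]

lemma base_LUS : LUS (term 0 0 0) := by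
  intro p hp
  obtain ⟨r1, hr1, hr1'⟩ := exists_between hp.1
  obtain ⟨r2, hr2, hr2'⟩ := exists_between hr1'
  have hr10 : 0 < r1 := lt_of_le_of_lt (norm_nonneg _) hr1
  set K := ‖p‖ + 1 with hK
  have hlim := (ratio_tendsto K).mul_const r1
  rw [one_mul] at hlim
  have hev : ∀ᶠ n : ℕ in atTop, ((n : ℝ) + K) ^ 2 / (((n : ℝ) - K) * (n + 1)) * r1 < r2 ∧ K < n :=
    (hlim.eventually_lt_const hr2).and
      (tendsto_natCast_atTop_atTop.eventually_gt_atTop K)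
  obtain ⟨n1, hn1⟩ := eventually_atTop.1 hev
  have hfin : ∀ᶠ q in 𝓝 p, ∀ n ∈ Finset.range (n1 + 1), ‖term 0 0 0 n q‖ ≤ ‖term 0 0 0 n p‖ + 1 := by
    rw [Filter.eventually_all_finset]
    intro n _
    have hc := (term_diff 0 0 0 n p hp).continuousAt.norm
    exact (hc.tendsto.eventually_lt_const (lt_add_one _)).mono fun _ h => h.le
  have hx : ∀ᶠ q : Fin 4 → ℂ in 𝓝 p, ‖q 0‖ < r1 := by
    have hc : ContinuousAt (fun q : Fin 4 → ℂ => ‖q 0‖) p :=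
      (continuous_apply 0).norm.continuousAt
    exact hc.tendsto.eventually_lt_const hr1
  have hnorm : ∀ᶠ q : Fin 4 → ℂ in 𝓝 p, ‖q‖ < K := by
    have hc : ContinuousAt (fun q : Fin 4 → ℂ => ‖q‖) p := by fun_prop
    exact hc.tendsto.eventually_lt_const (by simp [hK])
  refine ⟨fun n => if n < n1 then ‖term 0 0 0 n p‖ + 1 else
    (‖term 0 0 0 n1 p‖ + 1) * r2 ^ (n - n1), ?_, ?_⟩
  · rw [← summable_nat_add_iff n1]
    have : Summable fun n : ℕ => (‖term 0 0 0 n1 p‖ + 1) * r2 ^ n :=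
      (summable_geometric_of_lt_one (hr10.trans hr2).le hr2').mul_left _
    refine this.congr fun n => ?_
    rw [if_neg (by omega), Nat.add_sub_cancel]
  · filter_upwards [hfin, hx, hnorm, isOpen_Om.mem_nhds hp] with q h1 h2 h3 h4 n
    have hcoord : ∀ i, ‖q i‖ ≤ K := fun i => (norm_le_pi_norm q i).trans h3.le
    split_ifs with hn
    · exact h1 n (by simp; omega)
    · obtain ⟨b, rfl⟩ := Nat.exists_eq_add_of_le (not_lt.1 hn)
      clear hn
      rw [Nat.add_sub_cancel_left]
      induction b with
      | zero => simpa using h1 n1 (by simp)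
      | succ b ih =>
        rw [← add_assoc, term_succ _ _ h4, norm_mul, pow_succ, ← mul_assoc]
        refine mul_le_mul ih ?_ (norm_nonneg _)
          (mul_nonneg (by positivity) (pow_nonneg (hr10.trans hr2).le _))
        obtain ⟨a1, a2⟩ := hn1 (n1 + b) (by omega)
        generalize n1 + b = n at *
        refine le_trans ?_ a1.le
        have hK0 : 0 ≤ K := (norm_nonneg _).trans (hcoord 0)
        have b1 : ‖q 1 + n‖ ≤ n + K := by
          refine (norm_add_le _ _).trans ?_
          rw [Complex.norm_natCast]; linarith [hcoord 1]
        have b2 : ‖q 2 + n‖ ≤ n + K := by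
          refine (norm_add_le _ _).trans ?_
          rw [Complex.norm_natCast]; linarith [hcoord 2]
        have b3 : n - K ≤ ‖q 3 + n‖ := by
          have := norm_sub_le (q 3 + n) (q 3)
          rw [add_sub_cancel_left, Complex.norm_natCast] at this
          linarith [hcoord 3]
        have b4 : ‖((n : ℂ) + 1)‖ = n + 1 := by
          rw [← Nat.cast_succ, Complex.norm_natCast]; push_cast; ring
        have b5 : (0 : ℝ) < n - K := by linarith
        rw [norm_mul, norm_div, norm_mul, norm_mul, b4, pow_two]
        gcongr

lemma hgDeriv_eq (i j k : ℕ) : LUS (term i j k) ∧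
    ∀ p ∈ Om, hgDeriv15 i j k p = ∑' n, term i j k n p := by
  have h0 : ∀ p ∈ Om, hgF15 p = ∑' n, term 0 0 0 n p := by
    intro p _
    refine tsum_congr fun n => ?_
    simp only [term, cf, Nk, Function.iterate_zero, id, eval_one, zero_add, pow_one]
    ring
  have hk : LUS (term 0 0 k) ∧ ∀ p ∈ Om, (pd15 3)^[k] hgF15 p = ∑' n, term 0 0 k n p := by
    induction k with
    | zero => exact ⟨base_LUS, h0⟩
    | succ k ih =>
      rw [Function.iterate_succ_apply']
      exact pd_step 3 ih.1 (term_diff 0 0 k) (pd3_term 0 0 k) ih.2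
  have hj : LUS (term 0 j k) ∧ ∀ p ∈ Om, (pd15 2)^[j] ((pd15 3)^[k] hgF15) p =
      ∑' n, term 0 j k n p := by
    induction j with
    | zero => exact hk
    | succ j ih =>
      rw [Function.iterate_succ_apply']
      exact pd_step 2 ih.1 (term_diff 0 j k) (pd2_term 0 j k) ih.2
  unfold hgDeriv15
  induction i with
  | zero => exact hj
  | succ i ih =>
    rw [Function.iterate_succ_apply']
    exact pd_step 1 ih.1 (term_diff i j k) (pd1_term i j k) ih.2

end HG15

namespace HG15
open Polynomial Filter Topology

lemma eval_series {σ : Type*} (fam : σ → PowerSeries ℂ) (y : σ → ℂ) (x : ℂ)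
    (h : ∀ s, (Summable fun n => ‖PowerSeries.coeff n (fam s) * x ^ n‖) ∧
      ∑' n, PowerSeries.coeff n (fam s) * x ^ n = y s) (P : MvPolynomial σ ℂ) :
    (Summable fun n => ‖PowerSeries.coeff n (MvPolynomial.aeval fam P) * x ^ n‖) ∧
      ∑' n, PowerSeries.coeff n (MvPolynomial.aeval fam P) * x ^ n = MvPolynomial.eval y P := by
  induction P using MvPolynomial.induction_on with
  | C a =>
    have h0 : ∀ n, n ≠ 0 → PowerSeries.coeff n (MvPolynomial.aeval fam (MvPolynomial.C a)) * x ^ n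
        = 0 := by
      intro n hn
      simp [PowerSeries.coeff_C, hn]
    constructor
    · refine summable_of_ne_finset_zero (s := {0}) fun n hn => ?_
      rw [h0 n (by simpa using hn), norm_zero]
    · rw [tsum_eq_single 0 h0]
      simp
  | add p q hp hq =>
    have e : ∀ n, PowerSeries.coeff n (MvPolynomial.aeval fam (p + q)) * x ^ n =
        PowerSeries.coeff n (MvPolynomial.aeval fam p) * x ^ n +
        PowerSeries.coeff n (MvPolynomial.aeval fam q) * x ^ n := by
      intro n; rw [map_add, map_add, add_mul]
    simp only [e]
    constructor
    · exact Summable.of_nonneg_of_le (fun _ => norm_nonneg _) (fun _ => norm_add_le _ _)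
        (hp.1.add hq.1)
    · rw [hp.1.of_norm.tsum_add hq.1.of_norm, hp.2, hq.2, map_add]
  | mul_X p s hp =>
    have e : ∀ n, PowerSeries.coeff n (MvPolynomial.aeval fam (p * MvPolynomial.X s)) * x ^ n =
        ∑ kl ∈ Finset.HasAntidiagonal.antidiagonal n,
          (PowerSeries.coeff kl.1 (MvPolynomial.aeval fam p) * x ^ kl.1) *
          (PowerSeries.coeff kl.2 (fam s) * x ^ kl.2) := by
      intro n
      rw [map_mul, MvPolynomial.aeval_X, PowerSeries.coeff_mul, Finset.sum_mul]
      refine Finset.sum_congr rfl fun kl hkl => ?_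
      rw [Finset.HasAntidiagonal.mem_antidiagonal] at hkl
      rw [← hkl, pow_add]; ring
    have A := summable_norm_sum_mul_antidiagonal_of_summable_norm hp.1 (h s).1
    constructor
    · refine A.congr fun n => ?_
      rw [e n]
    · rw [tsum_congr e, ← tsum_mul_tsum_eq_tsum_sum_antidiagonal_of_summable_norm hp.1 (h s).1, hp.2, (h s).2,
        map_mul, MvPolynomial.eval_X]

lemma series_zero (S : PowerSeries ℂ)
    (h : ∀ x : ℂ, ‖x‖ < 1 → (Summable fun n => ‖PowerSeries.coeff n S * x ^ n‖) ∧
      ∑' n, PowerSeries.coeff n S * x ^ n = 0) : S = 0 := by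
  have h1 : HasFPowerSeriesAt (0 : ℂ → ℂ)
      (FormalMultilinearSeries.ofScalars ℂ (fun n => PowerSeries.coeff n S)) 0 := by
    rw [hasFPowerSeriesAt_iff]
    filter_upwards [Metric.ball_mem_nhds (0 : ℂ) one_pos] with z hz
    have hz' : ‖z‖ < 1 := by simpa using hz
    obtain ⟨a, b⟩ := h z hz'
    have := a.of_norm.hasSum
    rw [b] at this
    simpa [FormalMultilinearSeries.coeff_ofScalars, mul_comm] using this
  have h2 := h1.eq_zero
  ext n
  have h3 := congrArg (fun p => FormalMultilinearSeries.coeff p n) h2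
  rw [FormalMultilinearSeries.coeff_ofScalars] at h3
  rw [h3, map_zero]
  rfl

lemma base_series (α β γ x : ℂ) (s : Fin 4) :
    (Summable fun n => ‖PowerSeries.coeff n ((![PowerSeries.X, PowerSeries.C α, PowerSeries.C β,
      PowerSeries.C γ] : Fin 4 → PowerSeries ℂ) s) * x ^ n‖) ∧
    ∑' n, PowerSeries.coeff n ((![PowerSeries.X, PowerSeries.C α, PowerSeries.C β,
      PowerSeries.C γ] : Fin 4 → PowerSeries ℂ) s) * x ^ n = ![x, α, β, γ] s := by
  have hC : ∀ a : ℂ, (Summable fun n => ‖PowerSeries.coeff n (PowerSeries.C a) * x ^ n‖) ∧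
    ∑' n, PowerSeries.coeff n (PowerSeries.C a) * x ^ n = a := by
    intro a
    have h0 : ∀ n, n ≠ 0 → PowerSeries.coeff n (PowerSeries.C a) * x ^ n = 0 := by
      intro n hn
      simp [PowerSeries.coeff_C, hn]
    constructor
    · refine summable_of_ne_finset_zero (s := {0}) fun n hn => ?_
      rw [h0 n (by simpa using hn), norm_zero]
    · rw [tsum_eq_single 0 h0]
      simp
  have hX : (Summable fun n => ‖PowerSeries.coeff n (PowerSeries.X : PowerSeries ℂ) * x ^ n‖) ∧
    ∑' n, PowerSeries.coeff n (PowerSeries.X : PowerSeries ℂ) * x ^ n = x := by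
    have h0 : ∀ n, n ≠ 1 → PowerSeries.coeff n (PowerSeries.X : PowerSeries ℂ) * x ^ n = 0 := by
      intro n hn
      simp [PowerSeries.coeff_X, hn]
    constructor
    · refine summable_of_ne_finset_zero (s := {1}) fun n hn => ?_
      rw [h0 n (by simpa using hn), norm_zero]
    · rw [tsum_eq_single 1 h0]
      simp
  fin_cases s
  · exact hX
  · exact hC α
  · exact hC β
  · exact hC γ

/-- vanishing of the values implies vanishing of the formal series -/
lemma formal_zero (N : ℕ) (P : MvPolynomial (Fin 4 ⊕ (Fin N × Fin N × Fin N)) ℂ)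
    (hP : ∀ p ∈ Om, MvPolynomial.eval (Sum.elim (fun i => p i)
      (fun s => hgDeriv15 s.1 s.2.1 s.2.2 p)) P = 0) :
    ∀ α β, ∀ γ ∈ U, MvPolynomial.aeval (fam N α β γ) P = 0 := by
  intro α β γ hγ
  apply series_zero
  intro x hx
  have hp : ![x, α, β, γ] ∈ Om := ⟨hx, hγ⟩
  have := eval_series (fam N α β γ) (Sum.elim (fun i => ![x, α, β, γ] i)
      (fun s => hgDeriv15 s.1 s.2.1 s.2.2 ![x, α, β, γ])) x ?_ P
  · rw [hP _ hp] at this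
    exact this
  · rintro (s | s)
    · exact base_series α β γ x s
    · have h1 := (hgDeriv_eq s.1 s.2.1 s.2.2).1.summable hp
      have h2 := (hgDeriv_eq s.1 s.2.1 s.2.2).2 _ hp
      simp only [fam, Sum.elim_inr, PowerSeries.coeff_mk]
      exact ⟨h1, h2.symm⟩

lemma pderiv_totalDegree {σ : Type*} (P : MvPolynomial σ ℂ) (s : σ) (d : ℕ)
    (h : P.totalDegree ≤ d + 1) : (MvPolynomial.pderiv s P).totalDegree ≤ d := by
  classical
  refine Finset.sup_le fun m hm => ?_
  rw [MvPolynomial.mem_support_iff, MvPolynomial.coeff_pderiv] at hm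
  have h1 := left_ne_zero_of_mul hm
  have h2 := MvPolynomial.le_totalDegree (MvPolynomial.mem_support_iff.2 h1)
  rw [Finsupp.sum_add_index'] at h2
  · simp at h2
    omega
  · simp
  · simp

lemma notMem_vars {σ : Type*} (P : MvPolynomial σ ℂ) (s : σ)
    (h : MvPolynomial.pderiv s P = 0) : s ∉ P.vars := by
  classical
  rw [MvPolynomial.mem_vars_iff_mem_support]
  rintro ⟨d, hd, hs⟩
  have h1 : d - Finsupp.single s 1 + Finsupp.single s 1 = d := by
    apply tsub_add_cancel_of_le
    rw [Finsupp.single_le_iff]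
    rw [Finsupp.mem_support_iff] at hs
    omega
  have h2 := MvPolynomial.coeff_pderiv (i := s) P (d - Finsupp.single s 1)
  rw [h, h1, MvPolynomial.coeff_zero] at h2
  have h3 := mul_ne_zero (MvPolynomial.mem_support_iff.1 hd)
    (show ((((d - Finsupp.single s 1 : σ →₀ ℕ) s : ℕ) : ℂ) + 1) ≠ 0 by
      exact Nat.cast_add_one_ne_zero _)
  exact h3 h2.symm

lemma base_zero (P : MvPolynomial (Fin 4) ℂ) (hP : ∀ α β, ∀ γ ∈ U, MvPolynomial.aeval
    (![PowerSeries.X, PowerSeries.C α, PowerSeries.C β, PowerSeries.C γ] :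
      Fin 4 → PowerSeries ℂ) P = 0) : P = 0 := by
  have hUinf : U.Infinite := by
    refine Set.Infinite.mono (s := Set.range fun n : ℕ => ((n : ℂ) + 1)) ?_ ?_
    · rintro _ ⟨n, rfl⟩ m h
      have : ((n + 1 + m : ℕ) : ℂ) = 0 := by push_cast; linear_combination h
      have := Nat.cast_eq_zero.1 this
      omega
    · apply Set.infinite_range_of_injective
      intro a b h
      simpa using h
  refine MvPolynomial.funext_set (fun i => if i = 0 then Metric.ball 0 1 else
    if i = 3 then U else Set.univ) ?_ ?_
  · intro i
    split_ifs
    · exact infinite_of_mem_nhds (0 : ℂ) (Metric.ball_mem_nhds _ one_pos)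
    · exact hUinf
    · exact Set.infinite_univ
  · intro y hy
    have h3 : y 3 ∈ U := by simpa using hy 3 trivial
    have := (eval_series _ _ (y 0) (base_series (y 1) (y 2) (y 3) (y 0)) P).2
    rw [hP _ _ _ h3] at this
    have e : ![y 0, y 1, y 2, y 3] = y := by
      ext i; fin_cases i <;> rfl
    rw [e] at this
    rw [← this]
    simp

lemma formal_indep (N d : ℕ) : ∀ P : MvPolynomial (Fin 4 ⊕ (Fin N × Fin N × Fin N)) ℂ,
    P.totalDegree ≤ d → (∀ α β, ∀ γ ∈ U, MvPolynomial.aeval (fam N α β γ) P = 0) → P = 0 := by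
  have key : ∀ P : MvPolynomial (Fin 4 ⊕ (Fin N × Fin N × Fin N)) ℂ,
      (∀ α β, ∀ γ ∈ U, MvPolynomial.aeval (fam N α β γ) P = 0) →
      (∀ s, MvPolynomial.pderiv (Sum.inr s) P = 0) → P = 0 := by
    intro P hP hs
    obtain ⟨Q, rfl⟩ := MvPolynomial.exists_rename_eq_of_vars_subset_range P Sum.inl
      Sum.inl_injective (by
        rintro (s | s) h
        · exact ⟨s, rfl⟩
        · exact absurd h (notMem_vars P _ (hs s)))
    rw [base_zero Q, map_zero]
    intro α β γ hγ
    have := hP α β γ hγ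
    rwa [MvPolynomial.aeval_rename] at this
  induction d with
  | zero =>
    intro P hd hP
    refine key P hP fun s => ?_
    rw [MvPolynomial.totalDegree_eq_zero_iff_eq_C.1 (Nat.le_zero.1 hd), MvPolynomial.pderiv_C]
  | succ d ih =>
    intro P hd hP
    exact key P hP fun s => ih _ (pderiv_totalDegree P _ d hd) (main_prop N P hP s)

lemma final (P : MvPolynomial (Fin 4 ⊕ ℕ × ℕ × ℕ) ℂ)
    (hP : ∀ p ∈ Om, MvPolynomial.eval (Sum.elim (fun i => p i)
      (fun s => hgDeriv15 s.1 s.2.1 s.2.2 p)) P = 0) : P = 0 := by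
  classical
  obtain ⟨N, hN⟩ : ∃ N : ℕ, ∀ s : ℕ × ℕ × ℕ, Sum.inr s ∈ P.vars →
      s.1 < N ∧ s.2.1 < N ∧ s.2.2 < N := by
    let w : Fin 4 ⊕ ℕ × ℕ × ℕ → ℕ := Sum.elim (fun _ => 0) fun s => s.1 + s.2.1 + s.2.2
    refine ⟨P.vars.sup w + 1, fun s hs => ?_⟩
    have : w (Sum.inr s) ≤ P.vars.sup w := Finset.le_sup hs
    simp only [w, Sum.elim_inr] at this
    change _ ≤ P.vars.sup w at this
    omega
  let f : Fin 4 ⊕ (Fin N × Fin N × Fin N) → Fin 4 ⊕ ℕ × ℕ × ℕ :=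
    Sum.map id fun s => ((s.1 : ℕ), (s.2.1 : ℕ), (s.2.2 : ℕ))
  have hf : Function.Injective f := by
    apply Function.Injective.sumMap Function.injective_id
    rintro ⟨a, b, c⟩ ⟨a', b', c'⟩ h
    simp only [Prod.mk.injEq, Fin.val_inj] at h
    simp [h]
  obtain ⟨Q, rfl⟩ := MvPolynomial.exists_rename_eq_of_vars_subset_range P f hf (by
    rintro (s | s) h
    · exact ⟨Sum.inl s, rfl⟩
    · obtain ⟨h1, h2, h3⟩ := hN s h
      exact ⟨Sum.inr (⟨s.1, h1⟩, ⟨s.2.1, h2⟩, ⟨s.2.2, h3⟩), rfl⟩)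
  rw [formal_indep N _ Q le_rfl (formal_zero N Q ?_), map_zero]
  intro p hp
  have := hP p hp
  rw [MvPolynomial.eval_rename] at this
  convert this using 3
  funext s
  rcases s with s | s <;> rfl

end HG15

/-- The hypergeometric function satisfies no nonzero algebraic partial
differential equation with respect to the parameters `α, β, γ`: for every nonzero
polynomial `P` in the variables `X, A, B, C` (indexed by `Fin 4`) and `Y_{ijk}`
(indexed by `ℕ³`), there is a point of
`Ω = {(x,α,β,γ) : |x| < 1, γ ∉ -ℕ}` where substituting the coordinates and the parameter
derivatives of `F` into `P` gives a nonzero value. -/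
theorem stmt15 :
    let Ω : Set (Fin 4 → ℂ) := {p | ‖p 0‖ < 1 ∧ ∀ n : ℕ, p 3 ≠ -(n : ℂ)}
    ∀ P : MvPolynomial (Fin 4 ⊕ ℕ × ℕ × ℕ) ℂ, P ≠ 0 →
      ∃ p ∈ Ω, MvPolynomial.eval
        (Sum.elim (fun i => p i)
          (fun ijk => hgDeriv15 ijk.1 ijk.2.1 ijk.2.2 p)) P ≠ 0 := by
  intro Ω P hP
  by_contra hcon
  push Not at hcon
  exact hP (HG15.final P hcon)
end
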